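/- arXiv:1808.08736 — 2 statements merged into one kernel-verified Lean document; each statement's English description precedes it below -/
import Mathlib

section
/- There exist constants ε₀ ∈ (0,1) and C > 0 with the following property. Let ν ∈ (0,1], k ∈ ℤ with |k| ≥ 1 and νk² ≤ 1, ε ∈ (0, ε₀], and λ ∈ ℝ. Let w_{Na} : [−1,1] → ℂ be twice continuously differentiable with w_{Na}(−1) = w_{Na}(1) = 0, and set F(y) = −ν(w_{Na}''(y) − k²w_{Na}(y)) + ik(y−λ)w_{Na}(y) − ε·ν^{1/3}|k|^{2/3}w_{Na}(y). Define c₁ = −∫_{−1}^{1} (sinh(k(y+1))/sinh(2k))·w_{Na}(y) dy and c₂ = ∫_{−1}^{1} (sinh(k(1−y))/sinh(2k))·w_{Na}(y) dy. Then (1+|k(λ−1)|)·|c₁| + (1+|k(λ+1)|)·|c₂| ≤ C·ν^{−1/6}|k|^{−5/6}·‖F‖_{L²}. -/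
/-- The `L²` norm of a function on the interval `[-1,1]`. -/
noncomputable def nL2 (f : ℝ → ℂ) : ℝ :=
  (∫ y in Set.Icc (-1:ℝ) 1, ‖f y‖ ^ 2) ^ ((1:ℝ)/2)

/-- Algebraic core. -/
lemma alg_core (p q A B D g : ℝ) (hp : 0 < p) (hq : 0 < q) (hA : 0 ≤ A) (hB : 0 ≤ B)
    (hD : 0 ≤ D) (hg : 0 ≤ g) (h1 : p ^ 6 * D ^ 2 ≤ g * A)
    (h2 : q ^ 6 * B ^ 2 ≤ g * B + p ^ 6 * (D * A)) (h3 : A ^ 2 ≤ 2 * (B * D)) :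
    p ^ 2 * q ^ 4 * A ≤ 5 * g ∧ q ^ 6 * B ≤ 5 * g := by
  obtain ⟨a, ha, rfl⟩ : ∃ a, 0 ≤ a ∧ a ^ 2 = A := ⟨√A, Real.sqrt_nonneg _, Real.sq_sqrt hA⟩
  obtain ⟨h, hh, rfl⟩ : ∃ a, 0 ≤ a ∧ a ^ 2 = g := ⟨√g, Real.sqrt_nonneg _, Real.sq_sqrt hg⟩
  have e1 : p ^ 3 * D ≤ h * a := by
    apply le_of_pow_le_pow_left₀ (n := 2) (by norm_num) (by positivity)
    nlinarith
  obtain ⟨X, hX⟩ : ∃ X, X = q ^ 6 * a ^ 3 * p ^ 3 := ⟨_, rfl⟩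
  have hX0 : 0 ≤ X := by rw [hX]; positivity
  have e2 : (q ^ 6 * B) ^ 2 ≤ h ^ 4 + 2 * (q ^ 6 * (p ^ 6 * (D * a ^ 2))) := by
    have := mul_le_mul_of_nonneg_left h2 (by positivity : 0 ≤ q ^ 6)
    nlinarith [sq_nonneg (q ^ 6 * B - h ^ 2)]
  have e3 : q ^ 6 * (p ^ 6 * (D * a ^ 2)) ≤ h * X := by
    have := mul_le_mul_of_nonneg_left e1 (by positivity : 0 ≤ q ^ 6 * p ^ 3 * a ^ 2)
    rw [hX]; linarith
  have e4 : (q ^ 6 * B) ^ 2 ≤ h ^ 4 + 2 * (h * X) := by linarith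
  have e5 : X ≤ 9 * h ^ 3 := by
    rcases ha.eq_or_lt with h0 | h0
    · rw [hX, ← h0]; simp; positivity
    have s1 : X ^ 2 * a ^ 2 ≤ 4 * (p ^ 3 * D) ^ 2 * (q ^ 6 * B) ^ 2 := by
      have : (a ^ 2) ^ 2 * (a ^ 2) ^ 2 ≤ (2 * (B * D)) * (2 * (B * D)) := by
        apply mul_le_mul h3 h3 <;> positivity
      have := mul_le_mul_of_nonneg_left this (by positivity : 0 ≤ q ^ 12 * p ^ 6)
      rw [hX]; linarith
    have s2 : (p ^ 3 * D) ^ 2 ≤ (h * a) ^ 2 := pow_le_pow_left₀ (by positivity) e1 2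
    have s3 : 4 * (p ^ 3 * D) ^ 2 * (q ^ 6 * B) ^ 2 ≤ 4 * (h * a) ^ 2 * (h ^ 4 + 2 * (h * X)) := by
      apply mul_le_mul _ e4 <;> first | positivity | linarith
    have s4 : X ^ 2 ≤ 4 * h ^ 6 + 8 * h ^ 3 * X := by
      apply le_of_mul_le_mul_right _ (by positivity : 0 < a ^ 2)
      linarith
    by_contra hc
    push Not at hc
    have : 0 ≤ h ^ 3 := by positivity
    nlinarith
  constructor
  · apply le_of_pow_le_pow_left₀ (n := 3) (by norm_num) (by positivity)
    have : X ^ 2 ≤ (9 * h ^ 3) ^ 2 := pow_le_pow_left₀ hX0 e5 2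
    rw [hX] at this
    have h6 : 0 ≤ h ^ 6 := by positivity
    nlinarith
  · apply le_of_pow_le_pow_left₀ (n := 2) (by norm_num) (by positivity)
    have := mul_le_mul_of_nonneg_left e5 hh
    have h6 : 0 ≤ h ^ 4 := by positivity
    nlinarith

/-- Cauchy–Schwarz for continuous real functions on `[-1,1]`. -/
lemma cs_int (u v : ℝ → ℝ) (hu : Continuous u) (hv : Continuous v) :
    ∫ y in (-1:ℝ)..1, u y * v y ≤ √(∫ y in (-1:ℝ)..1, u y ^ 2) * √(∫ y in (-1:ℝ)..1, v y ^ 2) := by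
  have hU : 0 ≤ ∫ y in (-1:ℝ)..1, u y ^ 2 :=
    intervalIntegral.integral_nonneg (by norm_num) fun y _ => sq_nonneg _
  have key : ∀ t : ℝ, 0 ≤ (∫ y in (-1:ℝ)..1, u y ^ 2) * (t * t)
      + (-2 * ∫ y in (-1:ℝ)..1, u y * v y) * t + ∫ y in (-1:ℝ)..1, v y ^ 2 := by
    intro t
    have : 0 ≤ ∫ y in (-1:ℝ)..1, (u y ^ 2 * (t * t) + (-2 * (u y * v y)) * t + v y ^ 2) :=
      intervalIntegral.integral_nonneg (by norm_num) fun y _ => by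
        nlinarith [sq_nonneg (u y * t - v y)]
    rw [intervalIntegral.integral_add, intervalIntegral.integral_add,
      intervalIntegral.integral_mul_const, intervalIntegral.integral_mul_const,
      intervalIntegral.integral_const_mul] at this
    · exact this
    all_goals apply Continuous.intervalIntegrable; fun_prop
  have := discrim_le_zero key
  rw [discrim] at this
  rw [← Real.sqrt_mul hU]
  apply Real.le_sqrt_of_sq_le
  nlinarith

/-- Integrating a pointwise inequality modulo a total derivative. -/
lemma int_le (H H' P Q : ℝ → ℝ) (c : ℝ) (hH : ∀ y, HasDerivAt H (H' y) y)
    (hH' : Continuous H') (hP : Continuous P) (hQ : Continuous Q) (h1 : H (-1) = 0) (h2 : H 1 = 0)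
    (h : ∀ y, P y ≤ Q y + c * H' y) :
    ∫ y in (-1:ℝ)..1, P y ≤ ∫ y in (-1:ℝ)..1, Q y := by
  have e : ∫ y in (-1:ℝ)..1, H' y = 0 := by
    rw [intervalIntegral.integral_eq_sub_of_hasDerivAt (fun y _ => hH y)
      (hH'.intervalIntegrable _ _), h1, h2, sub_zero]
  have : ∫ y in (-1:ℝ)..1, P y ≤ ∫ y in (-1:ℝ)..1, (Q y + c * H' y) := by
    apply intervalIntegral.integral_mono_on (by norm_num) (hP.intervalIntegrable _ _)
    · apply Continuous.intervalIntegrable; fun_prop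
    · exact fun y _ => h y
  rw [intervalIntegral.integral_add (hQ.intervalIntegrable _ _)
    (by apply Continuous.intervalIntegrable; fun_prop), intervalIntegral.integral_const_mul, e] at this
  simpa using this

lemma re_le (z w : ℂ) : z.re * w.re + z.im * w.im ≤ ‖z‖ * ‖w‖ := by
  have := Complex.re_le_norm (z * (starRingEnd ℂ) w)
  simp at this; linarith

lemma im_le (z w : ℂ) : |z.im * w.re - z.re * w.im| ≤ ‖z‖ * ‖w‖ := by
  have := Complex.abs_im_le_norm (z * (starRingEnd ℂ) w)
  simp at this
  rwa [show z.im * w.re - z.re * w.im = -(z.re * w.im) + z.im * w.re by ring]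

lemma nsq (z : ℂ) : ‖z‖ ^ 2 = z.re ^ 2 + z.im ^ 2 := by
  rw [← Complex.normSq_eq_norm_sq, Complex.normSq_apply]; ring

/-- The resolvent estimates. -/
lemma resolvent_est (p q k s lam : ℝ) (w w1 w2 F : ℝ → ℂ) (hp : 0 < p) (hq : 0 < q)
    (hk : |k| = q ^ 6) (hs : 0 ≤ s) (hs' : s ≤ 1 / 10 * (p ^ 2 * q ^ 4))
    (hw : ∀ y, HasDerivAt w (w1 y) y) (hw1 : ∀ y, HasDerivAt w1 (w2 y) y) (hw2 : Continuous w2)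
    (hm : w (-1) = 0) (hM : w 1 = 0)
    (hF : ∀ y, F y = -((p ^ 6 : ℝ) : ℂ) * (w2 y - ((k : ℝ) : ℂ) ^ 2 * w y)
      + Complex.I * (k : ℂ) * ((y:ℂ) - (lam:ℂ)) * w y - (s : ℂ) * w y) :
    p ^ 2 * q ^ 4 * √(∫ y in (-1:ℝ)..1, ‖w y‖ ^ 2) ≤ 10 * √(∫ y in (-1:ℝ)..1, ‖F y‖ ^ 2) ∧
    q ^ 6 * √(∫ y in (-1:ℝ)..1, (|y - lam| * ‖w y‖) ^ 2) ≤ 10 * √(∫ y in (-1:ℝ)..1, ‖F y‖ ^ 2) := by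
  have cw : Continuous w := continuous_iff_continuousAt.2 fun y => (hw y).continuousAt
  have cw1 : Continuous w1 := continuous_iff_continuousAt.2 fun y => (hw1 y).continuousAt
  have cF : Continuous F := by
    have : F = _ := funext hF
    rw [this]; fun_prop
  have da : ∀ y, HasDerivAt (fun y => (w y).re) ((w1 y).re) y := fun y =>
    Complex.reCLM.hasFDerivAt.comp_hasDerivAt y (hw y)
  have db : ∀ y, HasDerivAt (fun y => (w y).im) ((w1 y).im) y := fun y =>
    Complex.imCLM.hasFDerivAt.comp_hasDerivAt y (hw y)
  have da1 : ∀ y, HasDerivAt (fun y => (w1 y).re) ((w2 y).re) y := fun y =>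
    Complex.reCLM.hasFDerivAt.comp_hasDerivAt y (hw1 y)
  have db1 : ∀ y, HasDerivAt (fun y => (w1 y).im) ((w2 y).im) y := fun y =>
    Complex.imCLM.hasFDerivAt.comp_hasDerivAt y (hw1 y)
  have dy : ∀ y : ℝ, HasDerivAt (fun y => y - lam) 1 y := fun y => (hasDerivAt_id y).sub_const lam
  have Fre : ∀ y, (F y).re = -p ^ 6 * ((w2 y).re - k ^ 2 * (w y).re) - k * (y - lam) * (w y).im
      - s * (w y).re := by
    intro y; rw [hF y, ← Complex.ofReal_pow, ← Complex.ofReal_sub]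
    simp [-Complex.ofReal_pow, -Complex.ofReal_sub]
    ring
  have Fim : ∀ y, (F y).im = -p ^ 6 * ((w2 y).im - k ^ 2 * (w y).im) + k * (y - lam) * (w y).re
      - s * (w y).im := by
    intro y; rw [hF y, ← Complex.ofReal_pow, ← Complex.ofReal_sub]
    simp [-Complex.ofReal_pow, -Complex.ofReal_sub]
  have cre : ∀ f : ℝ → ℂ, Continuous f → Continuous fun y => (f y).re :=
    fun f hf => Complex.continuous_re.comp hf
  have cim : ∀ f : ℝ → ℂ, Continuous f → Continuous fun y => (f y).im :=
    fun f hf => Complex.continuous_im.comp hf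
  have := cre w cw
  have := cim w cw
  have := cre w1 cw1
  have := cim w1 cw1
  have := cre w2 hw2
  have := cim w2 hw2
  -- energy
  have E1 : p ^ 6 * ∫ y in (-1:ℝ)..1, ‖w1 y‖ ^ 2 ≤
      (∫ y in (-1:ℝ)..1, ‖F y‖ * ‖w y‖) + s * ∫ y in (-1:ℝ)..1, ‖w y‖ ^ 2 := by
    have := int_le (fun y => (w1 y).re * (w y).re + (w1 y).im * (w y).im)
      (fun y => ((w2 y).re * (w y).re + (w1 y).re * (w1 y).re)
        + ((w2 y).im * (w y).im + (w1 y).im * (w1 y).im))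
      (fun y => p ^ 6 * ‖w1 y‖ ^ 2) (fun y => ‖F y‖ * ‖w y‖ + s * ‖w y‖ ^ 2) (p ^ 6)
      (fun y => ((da1 y).mul (da y)).add ((db1 y).mul (db y))) (by fun_prop) (by fun_prop)
      (by fun_prop) (by simp [hm]) (by simp [hM]) (by
        intro y
        have h := re_le (F y) (w y)
        rw [Fre, Fim] at h
        rw [nsq, nsq]
        have : 0 ≤ p ^ 6 * k ^ 2 * ((w y).re ^ 2 + (w y).im ^ 2) := by positivity
        linarith)
    rwa [intervalIntegral.integral_add, intervalIntegral.integral_const_mul,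
      intervalIntegral.integral_const_mul] at this
    all_goals apply Continuous.intervalIntegrable; fun_prop
  have E2 : q ^ 6 * ∫ y in (-1:ℝ)..1, (|y - lam| * ‖w y‖) ^ 2 ≤
      (∫ y in (-1:ℝ)..1, ‖F y‖ * (|y - lam| * ‖w y‖)) + p ^ 6 * ∫ y in (-1:ℝ)..1, ‖w1 y‖ * ‖w y‖ := by
    obtain ⟨σ, hσ, hσ'⟩ : ∃ σ : ℝ, |σ| = 1 ∧ σ * k = q ^ 6 := by
      rcases abs_cases k with h | h
      · exact ⟨1, by simp, by linarith⟩
      · exact ⟨-1, by simp, by linarith⟩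
    have := int_le (fun y => (y - lam) * ((w1 y).im * (w y).re - (w1 y).re * (w y).im))
      (fun y => 1 * ((w1 y).im * (w y).re - (w1 y).re * (w y).im) +
        (y - lam) * (((w2 y).im * (w y).re + (w1 y).im * (w1 y).re)
        - ((w2 y).re * (w y).im + (w1 y).re * (w1 y).im)))
      (fun y => q ^ 6 * (|y - lam| * ‖w y‖) ^ 2)
      (fun y => ‖F y‖ * (|y - lam| * ‖w y‖) + p ^ 6 * (‖w1 y‖ * ‖w y‖)) (σ * p ^ 6)
      (fun y => (dy y).mul (((db1 y).mul (da y)).sub ((da1 y).mul (db y)))) (by fun_prop)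
      (by fun_prop) (by fun_prop) (by simp [hm]) (by simp [hM]) (by
        intro y
        have h := im_le (F y) (w y)
        have h1 : σ * (y - lam) * ((F y).im * (w y).re - (F y).re * (w y).im)
            ≤ ‖F y‖ * (|y - lam| * ‖w y‖) := by
          refine (le_abs_self _).trans ?_
          rw [abs_mul, abs_mul, hσ]
          have := mul_le_mul_of_nonneg_left h (abs_nonneg (y - lam))
          linarith
        have h2 : -σ * ((w1 y).im * (w y).re - (w1 y).re * (w y).im) ≤ ‖w1 y‖ * ‖w y‖ := by
          refine (le_abs_self _).trans ?_
          rw [abs_mul, abs_neg, hσ, one_mul]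
          exact im_le _ _
        have h3 := mul_le_mul_of_nonneg_left h2 (by positivity : 0 ≤ p ^ 6)
        rw [Fre, Fim] at h1
        rw [mul_pow, sq_abs, nsq, ← hσ']
        linarith)
    rwa [intervalIntegral.integral_add, intervalIntegral.integral_const_mul,
      intervalIntegral.integral_const_mul] at this
    all_goals apply Continuous.intervalIntegrable; fun_prop
  have E3 : ∫ y in (-1:ℝ)..1, ‖w y‖ ^ 2 ≤ 2 * ∫ y in (-1:ℝ)..1, (|y - lam| * ‖w y‖) * ‖w1 y‖ := by
    have := int_le (fun y => (y - lam) * ((w y).re * (w y).re + (w y).im * (w y).im))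
      (fun y => 1 * ((w y).re * (w y).re + (w y).im * (w y).im) +
        (y - lam) * (((w1 y).re * (w y).re + (w y).re * (w1 y).re)
        + ((w1 y).im * (w y).im + (w y).im * (w1 y).im)))
      (fun y => ‖w y‖ ^ 2)
      (fun y => 2 * ((|y - lam| * ‖w y‖) * ‖w1 y‖)) 1
      (fun y => (dy y).mul (((da y).mul (da y)).add ((db y).mul (db y)))) (by fun_prop)
      (by fun_prop) (by fun_prop) (by simp [hm]) (by simp [hM]) (by
        intro y
        have h1 : -(y - lam) * ((w1 y).re * (w y).re + (w1 y).im * (w y).im)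
            ≤ |y - lam| * (‖w1 y‖ * ‖w y‖) := by
          refine (le_abs_self _).trans ?_
          rw [abs_mul, abs_neg]
          refine mul_le_mul_of_nonneg_left ?_ (abs_nonneg _)
          rw [abs_le]
          have h1 := re_le (w1 y) (w y)
          have h2 := re_le (-w1 y) (w y)
          rw [norm_neg, Complex.neg_re, Complex.neg_im] at h2
          constructor <;> linarith
        rw [nsq]
        linarith)
    rwa [intervalIntegral.integral_const_mul] at this
  have n0 : ∀ f : ℝ → ℝ, 0 ≤ ∫ y in (-1:ℝ)..1, f y ^ 2 := fun f =>
    intervalIntegral.integral_nonneg (by norm_num) fun y _ => sq_nonneg _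
  have C1 := cs_int (fun y => ‖F y‖) (fun y => ‖w y‖) (by fun_prop) (by fun_prop)
  have C2 := cs_int (fun y => ‖F y‖) (fun y => |y - lam| * ‖w y‖) (by fun_prop) (by fun_prop)
  have C3 := cs_int (fun y => ‖w1 y‖) (fun y => ‖w y‖) (by fun_prop) (by fun_prop)
  have C4 := cs_int (fun y => |y - lam| * ‖w y‖) (fun y => ‖w1 y‖) (by fun_prop) (by fun_prop)
  have SA := Real.sq_sqrt (n0 fun y => ‖w y‖)
  have SB := Real.sq_sqrt (n0 fun y => |y - lam| * ‖w y‖)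
  have SD := Real.sq_sqrt (n0 fun y => ‖w1 y‖)
  have A0 := Real.sqrt_nonneg (∫ y in (-1:ℝ)..1, ‖w y‖ ^ 2)
  have B0 := Real.sqrt_nonneg (∫ y in (-1:ℝ)..1, (|y - lam| * ‖w y‖) ^ 2)
  have D0 := Real.sqrt_nonneg (∫ y in (-1:ℝ)..1, ‖w1 y‖ ^ 2)
  have F0 := Real.sqrt_nonneg (∫ y in (-1:ℝ)..1, ‖F y‖ ^ 2)
  rw [← SD, ← SA] at E1
  rw [← SB] at E2
  rw [← SA] at E3
  clear SA SB SD
  generalize √(∫ y in (-1:ℝ)..1, ‖w y‖ ^ 2) = A at *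
  generalize √(∫ y in (-1:ℝ)..1, (|y - lam| * ‖w y‖) ^ 2) = B at *
  generalize √(∫ y in (-1:ℝ)..1, ‖w1 y‖ ^ 2) = D at *
  generalize √(∫ y in (-1:ℝ)..1, ‖F y‖ ^ 2) = f at *
  have sA : 0 ≤ s * A := mul_nonneg hs A0
  have sAB : 0 ≤ s * A * B := mul_nonneg sA B0
  have C3' := mul_le_mul_of_nonneg_left C3 (by positivity : 0 ≤ p ^ 6)
  obtain ⟨r1, r2⟩ := alg_core p q A B D (f + s * A) hp hq A0 B0 D0 (by positivity)
    (by linarith) (by linarith) (by linarith)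
  have := mul_le_mul_of_nonneg_right hs' A0
  constructor <;> linarith

/-- The `L¹` bound. -/
lemma L1_bound (d lam : ℝ) (hd : 0 < d) (w : ℝ → ℂ) (cw : Continuous w) :
    ∫ y in (-1:ℝ)..1, ‖w y‖ ≤ √((∫ y in (-1:ℝ)..1, (|y - lam| * ‖w y‖) ^ 2)
      + d ^ 2 * ∫ y in (-1:ℝ)..1, ‖w y‖ ^ 2) * √(4 / d) := by
  have pos : ∀ y : ℝ, 0 < (y - lam) ^ 2 + d ^ 2 := fun y => by positivity
  have h := cs_int (fun y => √((y - lam) ^ 2 + d ^ 2) * ‖w y‖)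
    (fun y => (√((y - lam) ^ 2 + d ^ 2))⁻¹) (by fun_prop)
    (Continuous.inv₀ (by fun_prop) fun y => (Real.sqrt_pos.2 (pos y)).ne')
  have e1 : ∀ y, √((y - lam) ^ 2 + d ^ 2) * ‖w y‖ * (√((y - lam) ^ 2 + d ^ 2))⁻¹ = ‖w y‖ := by
    intro y
    have := (Real.sqrt_pos.2 (pos y)).ne'
    field_simp
  have e2 : ∀ y, (√((y - lam) ^ 2 + d ^ 2) * ‖w y‖) ^ 2
      = (|y - lam| * ‖w y‖) ^ 2 + d ^ 2 * ‖w y‖ ^ 2 := by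
    intro y
    rw [mul_pow, Real.sq_sqrt (pos y).le, mul_pow, sq_abs]; ring
  have e3 : ∀ y, ((√((y - lam) ^ 2 + d ^ 2))⁻¹) ^ 2 = ((y - lam) ^ 2 + d ^ 2)⁻¹ := by
    intro y
    rw [inv_pow, Real.sq_sqrt (pos y).le]
  simp only [e1, e2, e3] at h
  rw [intervalIntegral.integral_add (by apply Continuous.intervalIntegrable; fun_prop)
    (by apply Continuous.intervalIntegrable; fun_prop), intervalIntegral.integral_const_mul] at h
  refine h.trans (mul_le_mul_of_nonneg_left (Real.sqrt_le_sqrt ?_) (Real.sqrt_nonneg _))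
  have hder : ∀ y : ℝ, HasDerivAt (fun y => d⁻¹ * Real.arctan ((y - lam) / d))
      (((y - lam) ^ 2 + d ^ 2)⁻¹) y := by
    intro y
    have := ((((hasDerivAt_id y).sub_const lam).div_const d).arctan).const_mul d⁻¹
    refine HasDerivAt.congr_deriv this ?_
    have := pos y
    have h2 : 0 < 1 + ((y - lam) / d) ^ 2 := by positivity
    simp only [id]
    field_simp
    ring
  rw [intervalIntegral.integral_eq_sub_of_hasDerivAt (fun y _ => hder y)
    (by apply Continuous.intervalIntegrable; exact Continuous.inv₀ (by fun_prop) fun y => (pos y).ne')]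
  have a1 := Real.arctan_lt_pi_div_two ((1 - lam) / d)
  have a2 := Real.neg_pi_div_two_lt_arctan ((-1 - lam) / d)
  have a3 := Real.pi_lt_four
  rw [← mul_sub, div_eq_inv_mul 4 d]
  apply mul_le_mul_of_nonneg_left _ (by positivity)
  linarith

/-- Bound for one coefficient. -/
lemma coeff_bound (p q lam e f : ℝ) (hp : 0 < p) (hq : 0 < q) (hpq : p * q ^ 2 ≤ 1) (hf : 0 ≤ f)
    (w : ℝ → ℂ) (cw : Continuous w) (m : ℝ → ℝ) (cm : Continuous m)
    (hm0 : ∀ y ∈ Set.Icc (-1:ℝ) 1, |m y| ≤ 1)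
    (hm1 : ∀ y ∈ Set.Icc (-1:ℝ) 1, q ^ 6 * |y - e| * |m y| ≤ 1)
    (hm2 : ∫ y in (-1:ℝ)..1, |m y| ^ 2 ≤ (q ^ 6)⁻¹)
    (hA : p ^ 2 * q ^ 4 * √(∫ y in (-1:ℝ)..1, ‖w y‖ ^ 2) ≤ 10 * f)
    (hB : q ^ 6 * √(∫ y in (-1:ℝ)..1, (|y - lam| * ‖w y‖) ^ 2) ≤ 10 * f) :
    (1 + q ^ 6 * |lam - e|) * ‖∫ y in (-1:ℝ)..1, (m y : ℂ) * w y‖ ≤ 70 * (p⁻¹ * (q⁻¹) ^ 5) * f := by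
  have n0 : ∀ f : ℝ → ℝ, 0 ≤ ∫ y in (-1:ℝ)..1, f y ^ 2 := fun f =>
    intervalIntegral.integral_nonneg (by norm_num) fun y _ => sq_nonneg _
  have L := L1_bound (p ^ 2 / q ^ 2) lam (by positivity) w cw
  have s4 : √(4 / (p ^ 2 / q ^ 2)) = 2 * q / p := by
    rw [show 4 / (p ^ 2 / q ^ 2) = (2 * q / p) ^ 2 by field_simp; norm_num, Real.sqrt_sq (by positivity)]
  have sB : √((∫ y in (-1:ℝ)..1, (|y - lam| * ‖w y‖) ^ 2)
      + (p ^ 2 / q ^ 2) ^ 2 * ∫ y in (-1:ℝ)..1, ‖w y‖ ^ 2) ≤ 15 * f / q ^ 6 := by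
    apply Real.sqrt_le_iff.2 ⟨by positivity, ?_⟩
    rw [← Real.sq_sqrt (n0 fun y => ‖w y‖), ← Real.sq_sqrt (n0 fun y => |y - lam| * ‖w y‖)]
    rw [div_pow (15 * f), le_div_iff₀ (by positivity)]
    have h1 := pow_le_pow_left₀ (by positivity) hA 2
    have h2 := pow_le_pow_left₀ (by positivity) hB 2
    generalize √(∫ y in (-1:ℝ)..1, ‖w y‖ ^ 2) = A at *
    generalize √(∫ y in (-1:ℝ)..1, (|y - lam| * ‖w y‖) ^ 2) = B at *
    have : (B ^ 2 + (p ^ 2 / q ^ 2) ^ 2 * A ^ 2) * (q ^ 6) ^ 2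
      = (q ^ 6 * B) ^ 2 + (p ^ 2 * q ^ 4 * A) ^ 2 := by field_simp
    rw [this]; nlinarith [sq_nonneg f]
  have L' : ∫ y in (-1:ℝ)..1, ‖w y‖ ≤ 30 * (p⁻¹ * (q⁻¹) ^ 5) * f := by
    rw [s4] at L
    refine (L.trans (mul_le_mul_of_nonneg_right sB (by positivity))).trans (le_of_eq ?_)
    field_simp; ring
  have M := cs_int (fun y => |m y|) (fun y => |y - lam| * ‖w y‖) (by fun_prop) (by fun_prop)
  have sm : √(∫ y in (-1:ℝ)..1, |m y| ^ 2) ≤ (q ^ 3)⁻¹ := by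
    apply Real.sqrt_le_iff.2 ⟨by positivity, hm2.trans (le_of_eq ?_)⟩
    field_simp
  have M' : q ^ 6 * ∫ y in (-1:ℝ)..1, |m y| * (|y - lam| * ‖w y‖) ≤ 10 * (p⁻¹ * (q⁻¹) ^ 5) * f := by
    calc _ ≤ q ^ 6 * ((q ^ 3)⁻¹ * √(∫ y in (-1:ℝ)..1, (|y - lam| * ‖w y‖) ^ 2)) := by
          apply mul_le_mul_of_nonneg_left _ (by positivity)
          exact M.trans (mul_le_mul_of_nonneg_right sm (Real.sqrt_nonneg _))
      _ = (q ^ 3)⁻¹ * (q ^ 6 * √(∫ y in (-1:ℝ)..1, (|y - lam| * ‖w y‖) ^ 2)) := by ring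
      _ ≤ (q ^ 3)⁻¹ * (10 * f) := mul_le_mul_of_nonneg_left hB (by positivity)
      _ = (p * q ^ 2) * (10 * (p⁻¹ * (q⁻¹) ^ 5) * f) := by field_simp
      _ ≤ 1 * (10 * (p⁻¹ * (q⁻¹) ^ 5) * f) := mul_le_mul_of_nonneg_right hpq (by positivity)
      _ = _ := one_mul _
  calc _ ≤ (1 + q ^ 6 * |lam - e|) * ∫ y in (-1:ℝ)..1, |m y| * ‖w y‖ := by
        apply mul_le_mul_of_nonneg_left _ (by positivity)
        refine (intervalIntegral.norm_integral_le_integral_norm (by norm_num)).trans (le_of_eq ?_)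
        simp
    _ = ∫ y in (-1:ℝ)..1, (1 + q ^ 6 * |lam - e|) * (|m y| * ‖w y‖) := by
        rw [intervalIntegral.integral_const_mul]
    _ ≤ ∫ y in (-1:ℝ)..1, (2 * ‖w y‖ + q ^ 6 * (|m y| * (|y - lam| * ‖w y‖))) := by
        apply intervalIntegral.integral_mono_on (by norm_num)
        · apply Continuous.intervalIntegrable; fun_prop
        · apply Continuous.intervalIntegrable; fun_prop
        intro y hy
        have h0 := mul_le_mul_of_nonneg_right (hm0 y hy) (norm_nonneg (w y))
        have h1 := mul_le_mul_of_nonneg_right (hm1 y hy) (norm_nonneg (w y))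
        have h2 : |lam - e| ≤ |y - lam| + |y - e| := by
          rw [abs_sub_comm y lam]; exact abs_sub_le _ _ _
        have h3 := mul_le_mul_of_nonneg_left h2 (by positivity : 0 ≤ q ^ 6 * (|m y| * ‖w y‖))
        linarith
    _ = 2 * (∫ y in (-1:ℝ)..1, ‖w y‖) + q ^ 6 * ∫ y in (-1:ℝ)..1, |m y| * (|y - lam| * ‖w y‖) := by
        rw [intervalIntegral.integral_add, intervalIntegral.integral_const_mul,
          intervalIntegral.integral_const_mul]
        all_goals apply Continuous.intervalIntegrable; fun_prop
    _ ≤ _ := by linarith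

lemma sinh_ratio (k K t : ℝ) (hk : |k| = K) (hK : 1 ≤ K) (ht : 0 ≤ t) (ht2 : t ≤ 2) :
    |Real.sinh (k * (2 - t)) / Real.sinh (2 * k)| ≤ Real.exp (-(K * t)) := by
  have e : Real.sinh (k * (2 - t)) / Real.sinh (2 * k)
      = Real.sinh (K * (2 - t)) / Real.sinh (2 * K) := by
    rcases abs_cases k with h | h
    · rw [← hk, h.1]
    · rw [← hk, h.1]
      simp only [neg_mul, mul_neg, Real.sinh_neg, neg_div_neg_eq]
  have hpos : 0 < Real.sinh (2 * K) := Real.sinh_pos_iff.2 (by linarith)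
  have h0 : 0 ≤ Real.sinh (K * (2 - t)) := Real.sinh_nonneg_iff.2 (mul_nonneg (by linarith) (by linarith))
  rw [e, abs_of_nonneg (div_nonneg h0 hpos.le), div_le_iff₀ hpos, Real.sinh_eq, Real.sinh_eq]
  have a1 : Real.exp (-(K * t)) * Real.exp (2 * K) = Real.exp (K * (2 - t)) := by
    rw [← Real.exp_add]; ring_nf
  have a2 : Real.exp (-(K * t)) * Real.exp (-(2 * K)) ≤ Real.exp (-(K * (2 - t))) := by
    rw [← Real.exp_add, Real.exp_le_exp]
    nlinarith
  linarith

lemma exp_facts (K t m : ℝ) (hK : 1 ≤ K) (ht : 0 ≤ t) (h : |m| ≤ Real.exp (-(K * t))) :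
    |m| ≤ 1 ∧ K * t * |m| ≤ 1 := by
  have hKt : 0 ≤ K * t := by positivity
  constructor
  · exact h.trans (Real.exp_le_one_iff.2 (by linarith))
  · have h1 := mul_le_mul_of_nonneg_left h hKt
    have h2 := Real.add_one_le_exp (K * t)
    have h3 : Real.exp (K * t) * Real.exp (-(K * t)) = 1 := by rw [← Real.exp_add]; simp
    have := mul_le_mul_of_nonneg_right h2 (Real.exp_pos (-(K * t))).le
    nlinarith [Real.exp_pos (-(K * t))]

lemma exp_sq_int (K σ : ℝ) (hK : 1 ≤ K) (hσ : σ = 1 ∨ σ = -1) (m : ℝ → ℝ) (cm : Continuous m)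
    (h : ∀ y ∈ Set.Icc (-1:ℝ) 1, |m y| ≤ Real.exp (-(K * (1 - σ * y)))) :
    ∫ y in (-1:ℝ)..1, |m y| ^ 2 ≤ K⁻¹ := by
  have hσ2 : σ * σ = 1 := by rcases hσ with rfl | rfl <;> norm_num
  have hder : ∀ y : ℝ, HasDerivAt (fun y => σ * (2 * K)⁻¹ * Real.exp (-(2 * K * (1 - σ * y))))
      (Real.exp (-(2 * K * (1 - σ * y)))) y := by
    intro y
    have := ((((((hasDerivAt_id y).const_mul σ).const_sub 1).const_mul (2 * K)).neg).exp).const_mul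
      (σ * (2 * K)⁻¹)
    refine HasDerivAt.congr_deriv this ?_
    simp only [id, Pi.neg_apply]
    have : σ * (2 * K)⁻¹ * (Real.exp (-(2 * K * (1 - σ * y))) * -(2 * K * -(σ * 1)))
      = (σ * σ) * ((2 * K)⁻¹ * (2 * K)) * Real.exp (-(2 * K * (1 - σ * y))) := by ring
    rw [this, hσ2, inv_mul_cancel₀ (by positivity)]; ring
  have e := intervalIntegral.integral_eq_sub_of_hasDerivAt (a := -1) (b := 1) (fun y _ => hder y)
    (by apply Continuous.intervalIntegrable; fun_prop)
  have : ∫ y in (-1:ℝ)..1, |m y| ^ 2 ≤ ∫ y in (-1:ℝ)..1, Real.exp (-(2 * K * (1 - σ * y))) := by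
    apply intervalIntegral.integral_mono_on (by norm_num)
    · apply Continuous.intervalIntegrable; fun_prop
    · apply Continuous.intervalIntegrable; fun_prop
    intro y hy
    have := pow_le_pow_left₀ (abs_nonneg _) (h y hy) 2
    rw [← Real.exp_nat_mul] at this
    refine this.trans (le_of_eq ?_)
    push_cast; ring_nf
  refine this.trans ?_
  rw [e]
  have i2 : (2 * K)⁻¹ = K⁻¹ / 2 := by rw [mul_inv]; ring
  have hi : 0 < K⁻¹ := by positivity
  have b1 : Real.exp (-(2 * K * (1 - 1))) ≤ 1 := by simp
  have b2 := Real.exp_pos (-(2 * K * (1 - -1)))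
  have b3 := mul_le_mul_of_nonneg_left b1 hi.le
  have b4 := mul_pos hi b2
  rcases hσ with rfl | rfl
  · rw [i2]
    simp only [one_mul, mul_neg] at *
    linarith
  · rw [i2]
    simp only [neg_mul, mul_neg, one_mul, mul_one, neg_neg] at *
    linarith

/-- `L²` bounds on the boundary-corrector coefficients `c₁, c₂`. -/
theorem statement5 :
    ∃ ε₀ C : ℝ, 0 < ε₀ ∧ ε₀ < 1 ∧ 0 < C ∧
      ∀ (ν : ℝ) (k : ℤ) (ε lam : ℝ) (wNa F : ℝ → ℂ) (c₁ c₂ : ℂ),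
        0 < ν → ν ≤ 1 → 1 ≤ |k| → ν * (k:ℝ)^2 ≤ 1 → 0 < ε → ε ≤ ε₀ →
        ContDiff ℝ 2 wNa → wNa (-1) = 0 → wNa 1 = 0 →
        (F = fun y : ℝ => -(ν : ℂ) * (deriv (deriv wNa) y - (k:ℂ)^2 * wNa y)
            + Complex.I * (k:ℂ) * ((y:ℂ) - (lam:ℂ)) * wNa y
            - ((ε * ν ^ ((1:ℝ)/3) * |(k:ℝ)| ^ ((2:ℝ)/3) : ℝ) : ℂ) * wNa y) →
        c₁ = -∫ y in Set.Icc (-1:ℝ) 1,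
              ((Real.sinh ((k:ℝ) * (y + 1)) / Real.sinh (2 * (k:ℝ)) : ℝ) : ℂ) * wNa y →
        c₂ = ∫ y in Set.Icc (-1:ℝ) 1,
              ((Real.sinh ((k:ℝ) * (1 - y)) / Real.sinh (2 * (k:ℝ)) : ℝ) : ℂ) * wNa y →
        (1 + |(k:ℝ) * (lam - 1)|) * ‖c₁‖ + (1 + |(k:ℝ) * (lam + 1)|) * ‖c₂‖
          ≤ C * ν ^ (-(1:ℝ)/6) * |(k:ℝ)| ^ (-(5:ℝ)/6) * nL2 F := by
  refine ⟨1 / 10, 140, by norm_num, by norm_num, by norm_num, ?_⟩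
  intro ν k ε lam w F c₁ c₂ hν hν1 hk hνk hε hε0 hw hwm hwM hF hc₁ hc₂
  have hK1 : (1:ℝ) ≤ |(k:ℝ)| := by exact_mod_cast hk
  obtain ⟨K, hK⟩ : ∃ K, K = |(k:ℝ)| := ⟨_, rfl⟩
  rw [← hK] at hK1
  have hK0 : 0 < K := by linarith
  have rp : ∀ x : ℝ, 0 < x → ∀ n : ℕ, (x ^ ((1:ℝ)/6)) ^ n = x ^ ((n:ℝ) / 6) := by
    intro x hx n
    rw [← Real.rpow_natCast, ← Real.rpow_mul hx.le]; congr 1; ring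
  obtain ⟨p, hp⟩ : ∃ p, p = ν ^ ((1:ℝ)/6) := ⟨_, rfl⟩
  obtain ⟨q, hq⟩ : ∃ q, q = K ^ ((1:ℝ)/6) := ⟨_, rfl⟩
  have p0 : 0 < p := hp ▸ Real.rpow_pos_of_pos hν _
  have q0 : 0 < q := hq ▸ Real.rpow_pos_of_pos hK0 _
  have p6 : ν = p ^ 6 := by rw [hp, rp ν hν]; norm_num
  have q6 : K = q ^ 6 := by rw [hq, rp K hK0]; norm_num
  have p2 : ν ^ ((1:ℝ)/3) = p ^ 2 := by rw [hp, rp ν hν]; norm_num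
  have q4 : K ^ ((2:ℝ)/3) = q ^ 4 := by rw [hq, rp K hK0]; norm_num
  have pm : ν ^ (-(1:ℝ)/6) = p⁻¹ := by rw [hp, ← Real.rpow_neg hν.le]; norm_num
  have qm : K ^ (-(5:ℝ)/6) = (q⁻¹) ^ 5 := by
    rw [inv_pow, hq, rp K hK0, ← Real.rpow_neg hK0.le]; norm_num
  have hpq : p * q ^ 2 ≤ 1 := by
    apply le_of_pow_le_pow_left₀ (n := 6) (by norm_num) (by positivity)
    rw [← sq_abs, ← hK, p6, q6] at hνk
    linarith
  have hw' : Differentiable ℝ w := hw.differentiable (by norm_num)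
  have hw1 : ContDiff ℝ 1 (deriv w) := by
    have : ContDiff ℝ (1 + 1) w := by norm_num; exact hw
    exact (contDiff_succ_iff_deriv.1 this).2.2
  have hw2 : Continuous (deriv (deriv w)) := hw1.continuous_deriv (by norm_num)
  have nF : nL2 F = √(∫ y in (-1:ℝ)..1, ‖F y‖ ^ 2) := by
    rw [nL2, Real.sqrt_eq_rpow, MeasureTheory.integral_Icc_eq_integral_Ioc,
      intervalIntegral.integral_of_le (by norm_num)]
  rw [← hK, p2, q4] at hF
  obtain ⟨rA, rB⟩ := resolvent_est p q k (ε * p ^ 2 * q ^ 4) lam w (deriv w) (deriv (deriv w)) F p0 q0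
    (by rw [← hK, q6]) (by positivity)
    (by have := mul_le_mul_of_nonneg_right hε0 (by positivity : 0 ≤ p ^ 2 * q ^ 4); linarith)
    (fun y => (hw' y).hasDerivAt) (fun y => (hw1.differentiable (by norm_num) y).hasDerivAt)
    hw2 hwm hwM (by intro y; rw [hF, p6]; push_cast; ring)
  rw [← nF] at rA rB
  have f0 : 0 ≤ nL2 F := by rw [nF]; positivity
  have b1 : ∀ y ∈ Set.Icc (-1:ℝ) 1, |Real.sinh ((k:ℝ) * (y + 1)) / Real.sinh (2 * (k:ℝ))|
      ≤ Real.exp (-(K * (1 - 1 * y))) := by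
    intro y hy
    have := sinh_ratio k K (1 - 1 * y) hK.symm hK1 (by linarith [hy.2]) (by linarith [hy.1])
    rwa [show 2 - (1 - 1 * y) = y + 1 by ring] at this
  have b2 : ∀ y ∈ Set.Icc (-1:ℝ) 1, |Real.sinh ((k:ℝ) * (1 - y)) / Real.sinh (2 * (k:ℝ))|
      ≤ Real.exp (-(K * (1 - (-1) * y))) := by
    intro y hy
    have := sinh_ratio k K (1 - (-1) * y) hK.symm hK1 (by linarith [hy.1]) (by linarith [hy.2])
    rwa [show 2 - (1 - (-1) * y) = 1 - y by ring] at this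
  have m1 : Continuous fun y : ℝ => Real.sinh ((k:ℝ) * (y + 1)) / Real.sinh (2 * (k:ℝ)) := by
    simp only [div_eq_mul_inv]; fun_prop
  have m2 : Continuous fun y : ℝ => Real.sinh ((k:ℝ) * (1 - y)) / Real.sinh (2 * (k:ℝ)) := by
    simp only [div_eq_mul_inv]; fun_prop
  have R1 := coeff_bound p q lam 1 (nL2 F) p0 q0 hpq f0 w hw.continuous _ m1
    (fun y hy => (exp_facts K _ _ hK1 (by linarith [hy.2]) (b1 y hy)).1)
    (fun y hy => by
      have := (exp_facts K _ _ hK1 (by linarith [hy.2]) (b1 y hy)).2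
      rw [one_mul] at this
      rwa [← q6, abs_sub_comm, abs_of_nonneg (by linarith [hy.2] : 0 ≤ 1 - y)])
    (by rw [← q6]; exact exp_sq_int K 1 hK1 (Or.inl rfl) _ m1 b1) rA rB
  have R2 := coeff_bound p q lam (-1) (nL2 F) p0 q0 hpq f0 w hw.continuous _ m2
    (fun y hy => (exp_facts K _ _ hK1 (by linarith [hy.1]) (b2 y hy)).1)
    (fun y hy => by
      have := (exp_facts K _ _ hK1 (by linarith [hy.1]) (b2 y hy)).2
      rwa [← q6, abs_of_nonneg (by linarith [hy.1] : 0 ≤ y - -1),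
        show y - -1 = 1 - (-1) * y by ring])
    (by rw [← q6]; exact exp_sq_int K (-1) hK1 (Or.inr rfl) _ m2 b2) rA rB
  rw [MeasureTheory.integral_Icc_eq_integral_Ioc,
    ← intervalIntegral.integral_of_le (by norm_num)] at hc₁ hc₂
  rw [← hc₂, sub_neg_eq_add] at R2
  have n1 : ‖c₁‖ = ‖∫ y in (-1:ℝ)..1,
      ((Real.sinh ((k:ℝ) * (y + 1)) / Real.sinh (2 * (k:ℝ)) : ℝ) : ℂ) * w y‖ := by
    rw [hc₁, norm_neg]
  rw [← n1] at R1
  rw [abs_mul, abs_mul, ← hK, pm, qm, q6]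
  linarith
end

section
/- There exist constants ε₀ ∈ (0,1) and C > 0 with the following property. Let ν ∈ (0,1], k ∈ ℤ with |k| ≥ 1 and νk² ≤ 1, ε ∈ (0, ε₀], and λ ∈ ℝ. Let w_{Na} : [−1,1] → ℂ be twice continuously differentiable with w_{Na}(−1) = w_{Na}(1) = 0, set F(y) = −ν(w_{Na}''(y) − k²w_{Na}(y)) + ik(y−λ)w_{Na}(y) − ε·ν^{1/3}|k|^{2/3}w_{Na}(y), and let M ≥ 0 dominate F in H^{−1}. Define c₁ = −∫_{−1}^{1} (sinh(k(y+1))/sinh(2k))·w_{Na}(y) dy and c₂ = ∫_{−1}^{1} (sinh(k(1−y))/sinh(2k))·w_{Na}(y) dy. Then (1+|k(λ−1)|)^{3/4}·|c₁| + (1+|k(λ+1)|)^{3/4}·|c₂| ≤ C·ν^{−1/2}|k|^{−1/2}·M. -/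
/-- The `L²` pairing of two functions on the interval `[-1,1]`. -/
noncomputable def innI (f g : ℝ → ℂ) : ℂ :=
  ∫ y in Set.Icc (-1:ℝ) 1, f y * (starRingEnd ℂ) (g y)

/-- `M ≥ 0` dominates `F` in `H^{-1}` : `|⟨F, φ⟩| ≤ M ‖φ‖_{H¹}` for every `C¹` function
vanishing at `±1`. -/
def Dominates (F : ℝ → ℂ) (M : ℝ) : Prop :=
  ∀ g : ℝ → ℂ, ContDiff ℝ 1 g → g (-1) = 0 → g 1 = 0 →
    ‖innI F g‖ ≤ M * ((nL2 g ^ 2 + nL2 (deriv g) ^ 2) ^ ((1:ℝ)/2))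

noncomputable def nn (f : ℝ → ℂ) : ℝ := Real.sqrt (∫ y in (-1:ℝ)..1, ‖f y‖ ^ 2)

lemma nn_nonneg (f : ℝ → ℂ) : 0 ≤ nn f := Real.sqrt_nonneg _

lemma nn_sq (f : ℝ → ℂ) : nn f ^ 2 = ∫ y in (-1:ℝ)..1, ‖f y‖ ^ 2 :=
  Real.sq_sqrt (intervalIntegral.integral_nonneg (by norm_num) (fun y _ => by positivity))

lemma cs_ineq (f g : ℝ → ℂ) (hf : Continuous f) (hg : Continuous g) :
    ∫ y in (-1:ℝ)..1, ‖f y‖ * ‖g y‖ ≤ nn f * nn g := by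
  have i1 : IntervalIntegrable (fun y => ‖f y‖ ^ 2) MeasureTheory.volume (-1:ℝ) 1 :=
    (by fun_prop : Continuous fun y => ‖f y‖ ^ 2).intervalIntegrable _ _
  have i2 : IntervalIntegrable (fun y => ‖g y‖ ^ 2) MeasureTheory.volume (-1:ℝ) 1 :=
    (by fun_prop : Continuous fun y => ‖g y‖ ^ 2).intervalIntegrable _ _
  have i3 : IntervalIntegrable (fun y => ‖f y‖ * ‖g y‖) MeasureTheory.volume (-1:ℝ) 1 :=
    (by fun_prop : Continuous fun y => ‖f y‖ * ‖g y‖).intervalIntegrable _ _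
  have key : ∀ t : ℝ, 0 ≤ (nn f ^ 2) * (t * t) + (-2 * ∫ y in (-1:ℝ)..1, ‖f y‖ * ‖g y‖) * t
      + nn g ^ 2 := by
    intro t
    have : (nn f ^ 2) * (t * t) + (-2 * ∫ y in (-1:ℝ)..1, ‖f y‖ * ‖g y‖) * t + nn g ^ 2
        = ∫ y in (-1:ℝ)..1, (t * t * ‖f y‖ ^ 2 + (-2 * t) * (‖f y‖ * ‖g y‖) + ‖g y‖ ^ 2) := by
      rw [intervalIntegral.integral_add ((i1.const_mul _).add (i3.const_mul _)) i2,
        intervalIntegral.integral_add (i1.const_mul _) (i3.const_mul _),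
        intervalIntegral.integral_const_mul, intervalIntegral.integral_const_mul, nn_sq, nn_sq]
      ring
    rw [this]
    apply intervalIntegral.integral_nonneg (by norm_num)
    intro y _
    nlinarith [sq_nonneg (t * ‖f y‖ - ‖g y‖)]
  have h := discrim_le_zero key
  unfold discrim at h
  have hn : 0 ≤ nn f * nn g := mul_nonneg (nn_nonneg _) (nn_nonneg _)
  apply le_of_sq_le_sq _ hn
  nlinarith

lemma cs_norm (f g h : ℝ → ℂ) (hf : Continuous f) (hg : Continuous g) (c : ℝ) (hc : 0 ≤ c)
    (hb : ∀ y, ‖h y‖ ≤ c * (‖f y‖ * ‖g y‖)) :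
    ‖∫ y in (-1:ℝ)..1, h y‖ ≤ c * (nn f * nn g) := by
  have i3 : IntervalIntegrable (fun y => c * (‖f y‖ * ‖g y‖)) MeasureTheory.volume (-1:ℝ) 1 :=
    (by fun_prop : Continuous fun y => c * (‖f y‖ * ‖g y‖)).intervalIntegrable _ _
  have h1 := intervalIntegral.norm_integral_le_of_norm_le (by norm_num : (-1:ℝ) ≤ 1)
    (Filter.Eventually.of_forall (fun y _ => hb y)) i3
  rw [intervalIntegral.integral_const_mul] at h1
  exact h1.trans (mul_le_mul_of_nonneg_left (cs_ineq f g hf hg) hc)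

lemma nn_le_of_bound (f g : ℝ → ℂ) (hf : Continuous f) (hg : Continuous g) (c : ℝ) (hc : 0 ≤ c)
    (hb : ∀ y, ‖f y‖ ≤ c * ‖g y‖) : nn f ≤ c * nn g := by
  apply le_of_sq_le_sq _ (mul_nonneg hc (nn_nonneg _))
  rw [mul_pow, nn_sq, nn_sq, ← intervalIntegral.integral_const_mul]
  apply intervalIntegral.integral_mono_on (by norm_num)
  · exact (by fun_prop : Continuous fun y => ‖f y‖ ^ 2).intervalIntegrable _ _
  · exact (by fun_prop : Continuous fun y => c ^ 2 * ‖g y‖ ^ 2).intervalIntegrable _ _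
  · intro y _
    rw [← mul_pow]
    exact pow_le_pow_left₀ (norm_nonneg _) (hb y) 2

lemma nn_add (f g : ℝ → ℂ) (hf : Continuous f) (hg : Continuous g) :
    nn (fun y => f y + g y) ≤ nn f + nn g := by
  apply le_of_sq_le_sq _ (add_nonneg (nn_nonneg _) (nn_nonneg _))
  have i1 : IntervalIntegrable (fun y => ‖f y‖ ^ 2) MeasureTheory.volume (-1:ℝ) 1 :=
    (by fun_prop : Continuous fun y => ‖f y‖ ^ 2).intervalIntegrable _ _
  have i2 : IntervalIntegrable (fun y => ‖g y‖ ^ 2) MeasureTheory.volume (-1:ℝ) 1 :=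
    (by fun_prop : Continuous fun y => ‖g y‖ ^ 2).intervalIntegrable _ _
  have i3 : IntervalIntegrable (fun y => ‖f y‖ * ‖g y‖) MeasureTheory.volume (-1:ℝ) 1 :=
    (by fun_prop : Continuous fun y => ‖f y‖ * ‖g y‖).intervalIntegrable _ _
  have h1 : nn (fun y => f y + g y) ^ 2 ≤
      ∫ y in (-1:ℝ)..1, (‖f y‖ ^ 2 + 2 * (‖f y‖ * ‖g y‖) + ‖g y‖ ^ 2) := by
    rw [nn_sq]
    apply intervalIntegral.integral_mono_on (by norm_num)
    · exact (by fun_prop : Continuous fun y => ‖f y + g y‖ ^ 2).intervalIntegrable _ _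
    · exact (i1.add (i3.const_mul _)).add i2
    · intro y _
      have := norm_add_le (f y) (g y)
      nlinarith [norm_nonneg (f y + g y)]
  rw [intervalIntegral.integral_add (i1.add (i3.const_mul _)) i2,
        intervalIntegral.integral_add i1 (i3.const_mul _),
        intervalIntegral.integral_const_mul, ← nn_sq, ← nn_sq] at h1
  nlinarith [cs_ineq f g hf hg]

def Weak (ν k e lam : ℝ) (w w' : ℝ → ℂ) (M : ℝ) : Prop :=
  ∀ g g' : ℝ → ℂ, (∀ y, HasDerivAt g (g' y) y) → Continuous g' → g (-1) = 0 → g 1 = 0 →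
    ‖(ν:ℂ) * (∫ y in (-1:ℝ)..1, w' y * g' y)
      + ∫ y in (-1:ℝ)..1, (((ν * k ^ 2 - e : ℝ) : ℂ)
          + Complex.I * ((k * (y - lam) : ℝ) : ℂ)) * (w y * g y)‖ ≤ M * (nn g + nn g')

lemma alg_ab (a b m ε : ℝ) (_ha : 0 ≤ a) (_hb : 0 ≤ b) (hm : 0 ≤ m) (_he : 0 < ε) (he2 : ε ≤ 1/416)
    (h1 : b ^ 2 ≤ 5 * a * b + m * (a + 2 * b)) (h2 : a ^ 2 ≤ m * (a + b) + ε * b ^ 2) :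
    a ≤ 15 * m ∧ b ≤ 106 * m := by
  have e1 : b ^ 2 ≤ 52 * a ^ 2 + 10 * m ^ 2 := by
    nlinarith [sq_nonneg (b / 2 - 5 * a), sq_nonneg (b / 2 - 2 * m), sq_nonneg (m - a), mul_nonneg hm _ha]
  have e2 : ε * b ^ 2 ≤ 1/416 * b ^ 2 := by gcongr
  have e3 : m * b ≤ 1/416 * b ^ 2 + 104 * m ^ 2 := by nlinarith [sq_nonneg (b - 208 * m)]
  have e4 : m * a ≤ a ^ 2 / 4 + m ^ 2 := by nlinarith [sq_nonneg (a - 2 * m)]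
  have e5 : a ^ 2 ≤ 212 * m ^ 2 := by nlinarith
  constructor
  · apply le_of_sq_le_sq _ (by positivity); nlinarith
  · apply le_of_sq_le_sq _ (by positivity); nlinarith

lemma mul_conj_norm (z : ℂ) : z * (starRingEnd ℂ) z = ((‖z‖ ^ 2 : ℝ) : ℂ) := by
  rw [Complex.mul_conj, Complex.normSq_eq_norm_sq]

lemma test_energy (ν k e lam : ℝ) (w w' : ℝ → ℂ) (M : ℝ)
    (hw : ∀ y, HasDerivAt w (w' y) y) (hw' : Continuous w') (h0 : w (-1) = 0) (h1 : w 1 = 0)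
    (hW : Weak ν k e lam w w' M) :
    ν * nn w' ^ 2 + (ν * k ^ 2 - e) * nn w ^ 2 ≤ M * (nn w + nn w') := by
  have hwc : Continuous w := continuous_iff_continuousAt.2 fun y => (hw y).continuousAt
  have hcd : ∀ y, HasDerivAt (fun y => (starRingEnd ℂ) (w y)) ((starRingEnd ℂ) (w' y)) y :=
    fun y => (hw y).star
  have h := hW (fun y => (starRingEnd ℂ) (w y)) (fun y => (starRingEnd ℂ) (w' y)) hcd
    (by fun_prop) (by simp [h0]) (by simp [h1])
  have n1 : nn (fun y => (starRingEnd ℂ) (w y)) = nn w := by simp [nn]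
  have n2 : nn (fun y => (starRingEnd ℂ) (w' y)) = nn w' := by simp [nn]
  rw [n1, n2] at h
  have e1 : ∫ y in (-1:ℝ)..1, w' y * (starRingEnd ℂ) (w' y) = ((nn w' ^ 2 : ℝ) : ℂ) := by
    rw [nn_sq, ← intervalIntegral.integral_ofReal]
    simp only [mul_conj_norm]
  have e2 : ∫ y in (-1:ℝ)..1, (((ν * k ^ 2 - e : ℝ) : ℂ)
          + Complex.I * ((k * (y - lam) : ℝ) : ℂ)) * (w y * (starRingEnd ℂ) (w y))
      = (((ν * k ^ 2 - e) * nn w ^ 2 : ℝ) : ℂ)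
        + Complex.I * ((∫ y in (-1:ℝ)..1, k * (y - lam) * ‖w y‖ ^ 2 : ℝ) : ℂ) := by
    rw [nn_sq, ← intervalIntegral.integral_const_mul, ← intervalIntegral.integral_ofReal,
      ← intervalIntegral.integral_ofReal, ← intervalIntegral.integral_const_mul,
      ← intervalIntegral.integral_add]
    · congr 1; ext y; rw [mul_conj_norm]; push_cast; ring
    · exact (by fun_prop : Continuous _).intervalIntegrable _ _
    · exact (by fun_prop : Continuous _).intervalIntegrable _ _
  rw [e1, e2] at h
  refine le_trans ?_ ((Complex.re_le_norm _).trans h)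
  simp only [Complex.add_re, Complex.mul_re, Complex.ofReal_re, Complex.ofReal_im, Complex.I_re,
    Complex.I_im]
  linarith

lemma test_im (ν k e lam δ : ℝ) (w w' : ℝ → ℂ) (M : ℝ) (hδ : 0 < δ) (hδ1 : δ ≤ 1) (hν : 0 < ν)
    (hM : 0 ≤ M)
    (hw : ∀ y, HasDerivAt w (w' y) y) (hw' : Continuous w') (h0 : w (-1) = 0) (h1 : w 1 = 0)
    (hW : Weak ν k e lam w w' M) :
    |k| * (∫ y in (-1:ℝ)..1, (δ * (y - lam) ^ 2 / (δ ^ 2 + (y - lam) ^ 2)) * ‖w y‖ ^ 2)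
      ≤ M * (nn w' + 2 * (nn w / δ)) + ν / δ * (nn w' * nn w) := by
  have hwc : Continuous w := continuous_iff_continuousAt.2 fun y => (hw y).continuousAt
  have hcd : ∀ y, HasDerivAt (fun y => (starRingEnd ℂ) (w y)) ((starRingEnd ℂ) (w' y)) y :=
    fun y => (hw y).star
  have hpos : ∀ y : ℝ, 0 < δ ^ 2 + (y - lam) ^ 2 := fun y => by positivity
  have hne : ∀ y : ℝ, δ ^ 2 + (y - lam) ^ 2 ≠ 0 := fun y => (hpos y).ne'
  set χ : ℝ → ℝ := fun y => δ * (y - lam) / (δ ^ 2 + (y - lam) ^ 2) with hχ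
  set χ' : ℝ → ℝ := fun y => δ * (δ ^ 2 - (y - lam) ^ 2) / (δ ^ 2 + (y - lam) ^ 2) ^ 2 with hχ'
  have cχ : Continuous χ := by
    rw [hχ]; exact Continuous.div (by fun_prop) (by fun_prop) hne
  have cχ' : Continuous χ' := by
    rw [hχ']; exact Continuous.div (by fun_prop) (by fun_prop) (fun y => pow_ne_zero 2 (hne y))
  have dχ : ∀ y, HasDerivAt χ (χ' y) y := by
    intro y
    have a1 : HasDerivAt (fun y : ℝ => δ * (y - lam)) δ y := by
      simpa using ((hasDerivAt_id y).sub_const lam).const_mul δ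
    have a2 : HasDerivAt (fun y : ℝ => δ ^ 2 + (y - lam) ^ 2) (2 * (y - lam)) y := by
      simpa using (((hasDerivAt_id y).sub_const lam).pow 2).const_add (δ ^ 2)
    refine (a1.div a2 (hne y)).congr_deriv ?_
    simp only [hχ']
    congr 1
    ring
  have bχ : ∀ y, |χ y| ≤ 1 := by
    intro y
    simp only [hχ]
    rw [abs_div, abs_of_pos (hpos y), div_le_one (hpos y), abs_mul, abs_of_pos hδ]
    nlinarith [sq_nonneg (δ - |y - lam|), sq_abs (y - lam), sq_nonneg δ, sq_nonneg (y-lam)]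
  have bχ' : ∀ y, |χ' y| ≤ 1 / δ := by
    intro y
    simp only [hχ']
    rw [abs_div, abs_of_pos (pow_pos (hpos y) 2), div_le_div_iff₀ (pow_pos (hpos y) 2) hδ, abs_mul,
      abs_of_pos hδ, one_mul]
    have : |δ ^ 2 - (y - lam) ^ 2| ≤ δ ^ 2 + (y - lam) ^ 2 := by
      rw [abs_le]; constructor <;> nlinarith [sq_nonneg δ, sq_nonneg (y - lam)]
    nlinarith [sq_nonneg δ, sq_nonneg (y - lam), hpos y, mul_le_mul_of_nonneg_left this (sq_nonneg δ)]
  have hgd : ∀ y, HasDerivAt (fun y => (χ y : ℂ) * (starRingEnd ℂ) (w y))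
      ((χ' y : ℂ) * (starRingEnd ℂ) (w y) + (χ y : ℂ) * (starRingEnd ℂ) (w' y)) y :=
    fun y => (dχ y).ofReal_comp.mul (hcd y)
  have h := hW _ _ hgd (by fun_prop) (by simp [h0]) (by simp [h1])
  have n1 : nn (fun y => (χ y : ℂ) * (starRingEnd ℂ) (w y)) ≤ 1 * nn w := by
    apply nn_le_of_bound _ _ (by fun_prop) hwc _ zero_le_one
    intro y
    simp only [norm_mul, Complex.norm_real, Real.norm_eq_abs, RCLike.norm_conj]
    exact mul_le_mul_of_nonneg_right (bχ y) (norm_nonneg _)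
  have n2 : nn (fun y => (χ' y : ℂ) * (starRingEnd ℂ) (w y)) ≤ (1/δ) * nn w := by
    apply nn_le_of_bound _ _ (by fun_prop) hwc _ (by positivity)
    intro y
    simp only [norm_mul, Complex.norm_real, Real.norm_eq_abs, RCLike.norm_conj]
    exact mul_le_mul_of_nonneg_right (bχ' y) (norm_nonneg _)
  have n3 : nn (fun y => (χ y : ℂ) * (starRingEnd ℂ) (w' y)) ≤ 1 * nn w' := by
    apply nn_le_of_bound _ _ (by fun_prop) hw' _ zero_le_one
    intro y
    simp only [norm_mul, Complex.norm_real, Real.norm_eq_abs, RCLike.norm_conj]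
    exact mul_le_mul_of_nonneg_right (bχ y) (norm_nonneg _)
  have n4 := nn_add (fun y => (χ' y : ℂ) * (starRingEnd ℂ) (w y))
    (fun y => (χ y : ℂ) * (starRingEnd ℂ) (w' y)) (by fun_prop) (by fun_prop)
  have e1 : ∫ y in (-1:ℝ)..1, w' y *
      ((χ' y : ℂ) * (starRingEnd ℂ) (w y) + (χ y : ℂ) * (starRingEnd ℂ) (w' y))
      = (∫ y in (-1:ℝ)..1, (χ' y : ℂ) * (w' y * (starRingEnd ℂ) (w y)))
        + ((∫ y in (-1:ℝ)..1, χ y * ‖w' y‖ ^ 2 : ℝ) : ℂ) := by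
    rw [← intervalIntegral.integral_ofReal, ← intervalIntegral.integral_add]
    · congr 1; ext y
      push_cast
      have := mul_conj_norm (w' y)
      push_cast at this
      rw [← this]; ring
    · exact (by fun_prop : Continuous _).intervalIntegrable _ _
    · exact (by fun_prop : Continuous _).intervalIntegrable _ _
  have e2 : ∫ y in (-1:ℝ)..1, (((ν * k ^ 2 - e : ℝ) : ℂ)
          + Complex.I * ((k * (y - lam) : ℝ) : ℂ)) * (w y * ((χ y : ℂ) * (starRingEnd ℂ) (w y)))
      = ((∫ y in (-1:ℝ)..1, (ν * k ^ 2 - e) * (χ y * ‖w y‖ ^ 2) : ℝ) : ℂ)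
        + Complex.I * ((k * ∫ y in (-1:ℝ)..1,
          (δ * (y - lam) ^ 2 / (δ ^ 2 + (y - lam) ^ 2)) * ‖w y‖ ^ 2 : ℝ) : ℂ) := by
    have : ∀ y, δ * (y - lam) ^ 2 / (δ ^ 2 + (y - lam) ^ 2) = (y - lam) * χ y := by
      intro y; simp only [hχ]; ring
    simp only [this]
    rw [← intervalIntegral.integral_const_mul, ← intervalIntegral.integral_ofReal,
      ← intervalIntegral.integral_ofReal, ← intervalIntegral.integral_const_mul,
      ← intervalIntegral.integral_add]
    · congr 1; ext y
      push_cast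
      have := mul_conj_norm (w y)
      push_cast at this
      rw [← this]; ring
    · exact (by fun_prop : Continuous _).intervalIntegrable _ _
    · exact (by fun_prop : Continuous _).intervalIntegrable _ _
  rw [e1, e2] at h
  have h3 : ‖∫ y in (-1:ℝ)..1, (χ' y : ℂ) * (w' y * (starRingEnd ℂ) (w y))‖
      ≤ (1/δ) * (nn w' * nn w) := by
    apply cs_norm w' w _ hw' hwc _ (by positivity)
    intro y
    simp only [norm_mul, Complex.norm_real, Real.norm_eq_abs, RCLike.norm_conj]
    exact mul_le_mul_of_nonneg_right (bχ' y) (by positivity)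
  set X := ∫ y in (-1:ℝ)..1, (χ' y : ℂ) * (w' y * (starRingEnd ℂ) (w y))
  set J := ∫ y in (-1:ℝ)..1, (δ * (y - lam) ^ 2 / (δ ^ 2 + (y - lam) ^ 2)) * ‖w y‖ ^ 2 with hJ
  have hJ0 : 0 ≤ J := by
    apply intervalIntegral.integral_nonneg (by norm_num)
    intro y _
    have := hpos y
    positivity
  have him := (Complex.abs_im_le_norm _).trans h
  simp only [Complex.add_im, Complex.mul_im, Complex.ofReal_re, Complex.ofReal_im, Complex.I_re,
    Complex.I_im, zero_mul, one_mul, add_zero, zero_add] at him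
  have hX := (Complex.abs_im_le_norm X).trans h3
  have hkJ : |k| * J = |k * J| := by rw [abs_mul, abs_of_nonneg hJ0]
  have t1 : |k * J| ≤ |ν * X.im + k * J| + ν * |X.im| := by
    have : k * J = (ν * X.im + k * J) - ν * X.im := by ring
    calc |k * J| = |(ν * X.im + k * J) - ν * X.im| := by rw [← this]
      _ ≤ |ν * X.im + k * J| + |ν * X.im| := abs_sub _ _
      _ = _ := by rw [abs_mul, abs_of_pos hν]
  rw [hkJ]
  have hb : nn w ≤ nn w / δ := by
    rw [le_div_iff₀ hδ]; nlinarith [nn_nonneg w]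
  have t2 : nn (fun y => (χ y : ℂ) * (starRingEnd ℂ) (w y)) +
      nn (fun y => (χ' y : ℂ) * (starRingEnd ℂ) (w y) + (χ y : ℂ) * (starRingEnd ℂ) (w' y))
      ≤ nn w' + 2 * (nn w / δ) := by
    have : (1/δ) * nn w = nn w / δ := by ring
    linarith
  have t3 := mul_le_mul_of_nonneg_left t2 hM
  have t4 := mul_le_mul_of_nonneg_left hX hν.le
  have t5 : ν * (1 / δ * (nn w' * nn w)) = ν / δ * (nn w' * nn w) := by ring
  linarith

lemma l2_split (lam δ : ℝ) (w w' : ℝ → ℂ) (hδ : 0 < δ)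
    (hw : ∀ y, HasDerivAt w (w' y) y) (hw' : Continuous w') (h0 : w (-1) = 0) (h1 : w 1 = 0) :
    nn w ^ 2 ≤ 4 * δ * (nn w' * nn w) + (1/δ) *
      (∫ y in (-1:ℝ)..1, (δ * (y - lam) ^ 2 / (δ ^ 2 + (y - lam) ^ 2)) * ‖w y‖ ^ 2) := by
  have hwc : Continuous w := continuous_iff_continuousAt.2 fun y => (hw y).continuousAt
  have hcd : ∀ y, HasDerivAt (fun y => (starRingEnd ℂ) (w y)) ((starRingEnd ℂ) (w' y)) y :=
    fun y => (hw y).star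
  have hpos : ∀ y : ℝ, 0 < δ ^ 2 + (y - lam) ^ 2 := fun y => by positivity
  have hne : ∀ y : ℝ, δ ^ 2 + (y - lam) ^ 2 ≠ 0 := fun y => (hpos y).ne'
  set ψ : ℝ → ℝ := fun y => δ * Real.arctan ((y - lam) / δ) with hψ
  set ψ' : ℝ → ℝ := fun y => δ ^ 2 / (δ ^ 2 + (y - lam) ^ 2) with hψ'
  have cψ : Continuous ψ := by
    rw [hψ]
    exact continuous_const.mul (Real.continuous_arctan.comp (by fun_prop))
  have cψ' : Continuous ψ' := by
    rw [hψ']; exact Continuous.div (by fun_prop) (by fun_prop) hne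
  have dψ : ∀ y, HasDerivAt ψ (ψ' y) y := by
    intro y
    have a1 : HasDerivAt (fun y : ℝ => (y - lam) / δ) (1 / δ) y :=
      ((hasDerivAt_id y).sub_const lam).div_const δ
    refine ((a1.arctan).const_mul δ).congr_deriv ?_
    simp only [hψ']
    field_simp
  have bψ : ∀ y, |ψ y| ≤ 2 * δ := by
    intro y
    simp only [hψ]
    rw [abs_mul, abs_of_pos hδ, mul_comm]
    gcongr
    rw [abs_le]
    have := Real.arctan_lt_pi_div_two ((y - lam) / δ)
    have := Real.neg_pi_div_two_lt_arctan ((y - lam) / δ)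
    constructor <;> linarith [Real.pi_lt_four]
  have hF : ∀ y, HasDerivAt (fun y => (ψ y : ℂ) * (w y * (starRingEnd ℂ) (w y)))
      ((ψ' y : ℂ) * (w y * (starRingEnd ℂ) (w y)) +
        (ψ y : ℂ) * (w' y * (starRingEnd ℂ) (w y) + w y * (starRingEnd ℂ) (w' y))) y :=
    fun y => (dψ y).ofReal_comp.mul ((hw y).mul (hcd y))
  have hI := intervalIntegral.integral_eq_sub_of_hasDerivAt (a := (-1:ℝ)) (b := 1)
    (fun y _ => hF y) ((by fun_prop : Continuous _).intervalIntegrable _ _)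
  rw [intervalIntegral.integral_add ((by fun_prop : Continuous _).intervalIntegrable _ _)
    ((by fun_prop : Continuous _).intervalIntegrable _ _)] at hI
  simp only [h0, h1, zero_mul, mul_zero, sub_zero] at hI
  have e1 : ∫ y in (-1:ℝ)..1, (ψ' y : ℂ) * (w y * (starRingEnd ℂ) (w y))
      = ((∫ y in (-1:ℝ)..1, ψ' y * ‖w y‖ ^ 2 : ℝ) : ℂ) := by
    rw [← intervalIntegral.integral_ofReal]
    congr 1; ext y; rw [mul_conj_norm]; push_cast; ring
  have e2 : ‖∫ y in (-1:ℝ)..1,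
      (ψ y : ℂ) * (w' y * (starRingEnd ℂ) (w y) + w y * (starRingEnd ℂ) (w' y))‖
      ≤ (4 * δ) * (nn w' * nn w) := by
    apply cs_norm w' w _ hw' hwc _ (by positivity)
    intro y
    rw [norm_mul, Complex.norm_real, Real.norm_eq_abs]
    have : ‖w' y * (starRingEnd ℂ) (w y) + w y * (starRingEnd ℂ) (w' y)‖
        ≤ 2 * (‖w' y‖ * ‖w y‖) := by
      refine (norm_add_le _ _).trans (le_of_eq ?_)
      simp only [norm_mul, RCLike.norm_conj]; ring
    calc _ ≤ (2 * δ) * (2 * (‖w' y‖ * ‖w y‖)) :=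
          mul_le_mul (bψ y) this (norm_nonneg _) (by positivity)
      _ = _ := by ring
  rw [e1] at hI
  have e3 : ∫ y in (-1:ℝ)..1, ψ' y * ‖w y‖ ^ 2 ≤ (4 * δ) * (nn w' * nn w) := by
    refine le_trans (le_abs_self _) ?_
    rw [← Real.norm_eq_abs, ← Complex.norm_real, eq_neg_of_add_eq_zero_left hI, norm_neg]
    exact e2
  have e4 : nn w ^ 2 = (∫ y in (-1:ℝ)..1, ψ' y * ‖w y‖ ^ 2) + (1/δ) *
      (∫ y in (-1:ℝ)..1, (δ * (y - lam) ^ 2 / (δ ^ 2 + (y - lam) ^ 2)) * ‖w y‖ ^ 2) := by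
    rw [nn_sq, ← intervalIntegral.integral_const_mul, ← intervalIntegral.integral_add]
    · congr 1; ext y
      simp only [hψ']
      have := hne y
      field_simp
    · exact (by fun_prop : Continuous _).intervalIntegrable _ _
    · refine Continuous.intervalIntegrable ?_ _ _
      exact continuous_const.mul ((Continuous.div (by fun_prop) (by fun_prop) hne).mul
        (by fun_prop))
  linarith

/-- basic resolvent bounds -/
lemma resolvent_bd (k ε lam δ : ℝ) (w w' : ℝ → ℂ) (M : ℝ) (hδ : 0 < δ) (hk : 1 ≤ |k|)
    (hkδ : |k| * δ ≤ 1) (hε : 0 < ε) (hε2 : ε ≤ 1/416) (hM : 0 ≤ M)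
    (hw : ∀ y, HasDerivAt w (w' y) y) (hw' : Continuous w') (h0 : w (-1) = 0) (h1 : w 1 = 0)
    (hW : Weak (|k| * δ ^ 3) k (ε * (|k| * δ)) lam w w' M) :
    nn w' ≤ 15 * (M / (|k| * δ ^ 3)) ∧ nn w / δ ≤ 106 * (M / (|k| * δ ^ 3)) := by
  have hK : 0 < |k| := by linarith
  have hδ1 : δ ≤ 1 := by nlinarith
  set ν := |k| * δ ^ 3 with hν
  have hνp : 0 < ν := by positivity
  have E := test_energy _ _ _ _ _ _ _ hw hw' h0 h1 hW
  have T := test_im _ _ _ _ δ _ _ _ hδ hδ1 hνp hM hw hw' h0 h1 hW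
  have S := l2_split lam δ w w' hδ hw hw' h0 h1
  set J := ∫ y in (-1:ℝ)..1, (δ * (y - lam) ^ 2 / (δ ^ 2 + (y - lam) ^ 2)) * ‖w y‖ ^ 2
  have hbw : nn w = δ * (nn w / δ) := by field_simp
  have ha := nn_nonneg w'
  have hb : 0 ≤ nn w / δ := div_nonneg (nn_nonneg _) hδ.le
  generalize hbb : nn w / δ = b at *
  generalize nn w' = a at *
  rw [hbw] at E T S
  have hm : M = ν * (M / ν) := by field_simp
  have hm0 : 0 ≤ M / ν := by positivity
  generalize M / ν = m at *
  apply alg_ab a b m ε ha hb hm0 hε hε2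
  · have S2 : |k| * δ * (δ * b) ^ 2 ≤ |k| * δ * (4 * δ * (a * (δ * b)) + 1 / δ * J) :=
      mul_le_mul_of_nonneg_left S (by positivity)
    have q1 : |k| * δ * (δ * b) ^ 2 = ν * b ^ 2 := by rw [hν]; ring
    have q2 : |k| * δ * (4 * δ * (a * (δ * b)) + 1 / δ * J) = ν * (4 * a * b) + |k| * J := by
      rw [hν]; field_simp
    have q3 : ν / δ * (a * (δ * b)) = ν * (a * b) := by field_simp
    rw [q1, q2] at S2
    rw [q3, hm] at T
    have : ν * b ^ 2 ≤ ν * (5 * a * b + m * (a + 2 * b)) := by nlinarith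
    exact le_of_mul_le_mul_left this hνp
  · have q1 : ε * (|k| * δ) * (δ * b) ^ 2 = ν * (ε * b ^ 2) := by rw [hν]; ring
    have q2 : 0 ≤ ν * k ^ 2 * (δ * b) ^ 2 := by positivity
    have q3 : δ * b ≤ b := by nlinarith
    have q4 : M * (δ * b + a) ≤ M * (b + a) := by gcongr
    have q5 : M * (b + a) = ν * (m * (a + b)) := by rw [hm]; ring
    have : ν * a ^ 2 ≤ ν * (m * (a + b) + ε * b ^ 2) := by nlinarith
    exact le_of_mul_le_mul_left this hνp

lemma int_exp (a : ℝ) (ha : 0 < a) : ∫ y in (-1:ℝ)..1, Real.exp (-(a * (1 - y))) ≤ 1 / a := by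
  have hF : ∀ y, HasDerivAt (fun y : ℝ => Real.exp (-(a * (1 - y))) / a)
      (Real.exp (-(a * (1 - y)))) y := by
    intro y
    have a1 : HasDerivAt (fun y : ℝ => -(a * (1 - y))) a y := by
      exact ((((hasDerivAt_id y).const_sub 1).const_mul a).fun_neg).congr_deriv (by simp)
    refine (a1.exp.div_const a).congr_deriv ?_
    field_simp
  rw [intervalIntegral.integral_eq_sub_of_hasDerivAt (fun y _ => hF y)
    ((by fun_prop : Continuous _).intervalIntegrable _ _)]
  have : 0 ≤ Real.exp (-(a * (1 - (-1)))) / a := by positivity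
  simp at this ⊢
  exact this

lemma int_cauchy (lam δ : ℝ) (hδ : 0 < δ) :
    ∫ y in (-1:ℝ)..1, 1 / (δ ^ 2 + (y - lam) ^ 2) ≤ 4 / δ := by
  have hpos : ∀ y : ℝ, 0 < δ ^ 2 + (y - lam) ^ 2 := fun y => by positivity
  have hne : ∀ y : ℝ, δ ^ 2 + (y - lam) ^ 2 ≠ 0 := fun y => (hpos y).ne'
  have hF : ∀ y, HasDerivAt (fun y : ℝ => Real.arctan ((y - lam) / δ) / δ)
      (1 / (δ ^ 2 + (y - lam) ^ 2)) y := by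
    intro y
    have a1 : HasDerivAt (fun y : ℝ => (y - lam) / δ) (1 / δ) y :=
      ((hasDerivAt_id y).sub_const lam).div_const δ
    refine ((a1.arctan).div_const δ).congr_deriv ?_
    have := hne y
    field_simp
  rw [intervalIntegral.integral_eq_sub_of_hasDerivAt (fun y _ => hF y)
    ((Continuous.div (by fun_prop) (by fun_prop) hne).intervalIntegrable _ _), ← sub_div]
  gcongr
  linarith [Real.arctan_lt_pi_div_two ((1 - lam) / δ), Real.pi_lt_four,
    Real.neg_pi_div_two_lt_arctan ((-1 - lam) / δ)]

lemma pt_main (K δ u x φ A : ℝ) (hK : 0 < K) (hδ : 0 < δ) (hx : 0 ≤ x) (hφ : 0 ≤ φ)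
    (hφ2 : φ ≤ Real.exp (-(K * x))) (hA0 : 0 ≤ A) (hA : A ≤ 1 + K * |x + u|) :
    A ^ 2 * (φ ^ 2 * (1 / (δ ^ 2 + u ^ 2)))
      ≤ 8 * (1 / (δ ^ 2 + u ^ 2) + K ^ 2 * Real.exp (-(K * x))) := by
  have hR : 0 < δ ^ 2 + u ^ 2 := by positivity
  set E := Real.exp (-(K * x) / 2) with hE
  have hE0 : 0 < E := Real.exp_pos _
  have hEE : Real.exp (-(K * x)) = E ^ 2 := by
    rw [hE, ← Real.exp_nat_mul]; congr 1; push_cast; ring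
  have hE1 : E ≤ 1 := by
    rw [hE, Real.exp_le_one_iff]; nlinarith [mul_nonneg hK.le hx]
  have h1 : (1 + K * x) * E ≤ 2 := by
    have : 1 + K * x / 2 ≤ Real.exp (K * x / 2) := by linarith [Real.add_one_le_exp (K * x / 2)]
    have h2 : Real.exp (K * x / 2) * E = 1 := by
      rw [hE, ← Real.exp_add]; simp; ring
    have h3 : (1 + K * x / 2) * E ≤ 1 := by
      exact (mul_le_mul_of_nonneg_right this hE0.le).trans h2.le
    nlinarith
  have hA2 : A ≤ (1 + K * x) * (1 + K * |u|) := by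
    have : |x + u| ≤ x + |u| := by
      have := abs_add_le x u; rwa [abs_of_nonneg hx] at this
    nlinarith [mul_le_mul_of_nonneg_left this hK.le,
      mul_nonneg (mul_nonneg hK.le hx) (mul_nonneg hK.le (abs_nonneg u))]
  rw [hEE] at hφ2 ⊢
  have h4 : A * φ ≤ 2 * E * (1 + K * |u|) := by
    have hu : 0 ≤ 1 + K * |u| := by positivity
    calc A * φ ≤ ((1 + K * x) * (1 + K * |u|)) * E ^ 2 :=
          mul_le_mul hA2 hφ2 hφ (by positivity)
      _ = ((1 + K * x) * E) * (E * (1 + K * |u|)) := by ring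
      _ ≤ 2 * (E * (1 + K * |u|)) := mul_le_mul_of_nonneg_right h1 (by positivity)
      _ = _ := by ring
  have h5 : (A * φ) ^ 2 ≤ 8 * (1 + K ^ 2 * E ^ 2 * (δ ^ 2 + u ^ 2)) := by
    have h6 : (A * φ) ^ 2 ≤ (2 * E * (1 + K * |u|)) ^ 2 :=
      pow_le_pow_left₀ (by positivity) h4 2
    have h7 : (1 + K * |u|) ^ 2 ≤ 2 * (1 + K ^ 2 * u ^ 2) := by
      nlinarith [sq_nonneg (1 - K * |u|), sq_abs u]
    have h8 : E ^ 2 ≤ 1 := by nlinarith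
    have h9 : (2 * E * (1 + K * |u|)) ^ 2 ≤ 4 * E ^ 2 * (2 * (1 + K ^ 2 * u ^ 2)) := by
      calc _ = 4 * E ^ 2 * (1 + K * |u|) ^ 2 := by ring
        _ ≤ _ := mul_le_mul_of_nonneg_left h7 (by positivity)
    have h10 : 0 ≤ K ^ 2 * E ^ 2 * δ ^ 2 := by positivity
    nlinarith
  calc A ^ 2 * (φ ^ 2 * (1 / (δ ^ 2 + u ^ 2))) = (A * φ) ^ 2 / (δ ^ 2 + u ^ 2) := by ring
    _ ≤ 8 * (1 + K ^ 2 * E ^ 2 * (δ ^ 2 + u ^ 2)) / (δ ^ 2 + u ^ 2) := by gcongr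
    _ = _ := by field_simp

lemma pt_layer (δ l u x D : ℝ) (hδ : 0 < δ) (hl : 0 < l) (hlδ : l ≤ δ) (hx : 0 ≤ x)
    (hD0 : 0 < D) (hD : D ≤ δ + |x + u|) :
    1 / (δ ^ 2 + u ^ 2) ≤ 8 * Real.exp (x / l) / D ^ 2 := by
  have hR : 0 < δ ^ 2 + u ^ 2 := by positivity
  rw [div_le_div_iff₀ hR (by positivity), one_mul]
  set E := Real.exp (x / l / 2) with hE
  have hEE : Real.exp (x / l) = E ^ 2 := by
    rw [hE, ← Real.exp_nat_mul]; congr 1; push_cast; ring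
  have h1 : 1 + x / l ≤ 2 * E := by
    have := Real.add_one_le_exp (x / l / 2)
    rw [← hE] at this
    linarith
  have h2 : x ≤ δ * (x / l) := by
    rw [mul_div_assoc', le_div_iff₀ hl]; nlinarith
  have h3 : D ≤ (δ + |u|) * (1 + x / l) := by
    have : |x + u| ≤ x + |u| := by
      have := abs_add_le x u; rwa [abs_of_nonneg hx] at this
    have h4 : 0 ≤ |u| * (x / l) := by positivity
    nlinarith
  have h5 : D ≤ (δ + |u|) * (2 * E) :=
    h3.trans (mul_le_mul_of_nonneg_left h1 (by positivity))
  have h6 : D ^ 2 ≤ ((δ + |u|) * (2 * E)) ^ 2 := pow_le_pow_left₀ hD0.le h5 2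
  have h7 : (δ + |u|) ^ 2 ≤ 2 * (δ ^ 2 + u ^ 2) := by
    nlinarith [sq_nonneg (δ - |u|), sq_abs u]
  rw [hEE]
  calc D ^ 2 ≤ ((δ + |u|) * (2 * E)) ^ 2 := h6
    _ = 4 * E ^ 2 * (δ + |u|) ^ 2 := by ring
    _ ≤ 4 * E ^ 2 * (2 * (δ ^ 2 + u ^ 2)) := mul_le_mul_of_nonneg_left h7 (by positivity)
    _ = _ := by ring

lemma phi_le (K y : ℝ) (hK : 1 ≤ K) (hy : -1 ≤ y) (hy1 : y ≤ 1) :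
    0 ≤ Real.sinh (K * (y + 1)) / Real.sinh (2 * K) ∧
    Real.sinh (K * (y + 1)) / Real.sinh (2 * K) ≤ Real.exp (-(K * (1 - y))) ∧
    0 ≤ K * Real.cosh (K * (y + 1)) / Real.sinh (2 * K) ∧
    K * Real.cosh (K * (y + 1)) / Real.sinh (2 * K) ≤ 4 * K * Real.exp (-(K * (1 - y))) := by
  have hs : 0 < Real.sinh (2 * K) := Real.sinh_pos_iff.2 (by linarith)
  have ha : 0 ≤ K * (y + 1) := mul_nonneg (by linarith) (by linarith)
  have hc := Real.cosh_pos (K * (y + 1))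
  have hab : K * (y + 1) ≤ 2 * K := by nlinarith
  have hexp : Real.exp (-(K * (1 - y))) = Real.exp (K * (y + 1)) * Real.exp (-(2 * K)) := by
    rw [← Real.exp_add]; congr 1; ring
  have e1 : Real.exp (2 * K) * Real.exp (-(2 * K)) = 1 := by rw [← Real.exp_add]; simp
  have e2 : Real.exp (K * (y + 1)) * Real.exp (-(K * (y + 1))) = 1 := by
    rw [← Real.exp_add]; simp
  refine ⟨div_nonneg (Real.sinh_nonneg_iff.2 ha) hs.le, ?_, by positivity, ?_⟩
  · rw [div_le_iff₀ hs, hexp, Real.sinh_eq, Real.sinh_eq]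
    have p : Real.exp (-(2 * K)) ≤ Real.exp (-(K * (y + 1))) := Real.exp_le_exp.2 (by linarith)
    have p1 := Real.exp_pos (-(2 * K))
    have p2 := Real.exp_pos (K * (y + 1))
    have : Real.exp (K * (y + 1)) * Real.exp (-(2 * K)) *
        ((Real.exp (2 * K) - Real.exp (-(2 * K))) / 2)
        = (Real.exp (K * (y + 1)) - Real.exp (K * (y + 1)) * Real.exp (-(2 * K)) * Real.exp (-(2 * K))) / 2 := by
      linear_combination (Real.exp (K * (y + 1)) / 2) * e1
    rw [this]
    have q : Real.exp (K * (y + 1)) * Real.exp (-(2 * K)) ≤ 1 := by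
      exact (mul_le_mul_of_nonneg_left p p2.le).trans e2.le
    have q2 : Real.exp (K * (y + 1)) * Real.exp (-(2 * K)) * Real.exp (-(2 * K))
        ≤ 1 * Real.exp (-(K * (y + 1))) :=
      mul_le_mul q p p1.le zero_le_one
    linarith
  · rw [div_le_iff₀ hs, hexp]
    have p2 := Real.exp_pos (K * (y + 1))
    have c1 : Real.cosh (K * (y + 1)) ≤ Real.exp (K * (y + 1)) := by
      rw [Real.cosh_eq]
      have : Real.exp (-(K * (y + 1))) ≤ Real.exp (K * (y + 1)) := Real.exp_le_exp.2 (by linarith)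
      linarith
    have c2 : 1 ≤ 4 * (Real.exp (-(2 * K)) * Real.sinh (2 * K)) := by
      rw [Real.sinh_eq]
      have p3 : Real.exp (-(2 * K)) ≤ 1 / 2 := by
        have h1 : 2 ≤ Real.exp (2 * K) := by linarith [Real.add_one_le_exp (2 * K)]
        have := Real.exp_pos (-(2 * K))
        nlinarith
      have := Real.exp_pos (-(2 * K))
      nlinarith
    calc K * Real.cosh (K * (y + 1)) ≤ K * Real.exp (K * (y + 1)) := by gcongr
      _ = K * Real.exp (K * (y + 1)) * 1 := by ring
      _ ≤ K * Real.exp (K * (y + 1)) * (4 * (Real.exp (-(2 * K)) * Real.sinh (2 * K))) :=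
        mul_le_mul_of_nonneg_left c2 (by positivity)
      _ = _ := by ring

lemma w_bound (w w' : ℝ → ℂ) (hw : ∀ y, HasDerivAt w (w' y) y) (hw' : Continuous w')
    (h1 : w 1 = 0) (y c : ℝ) (hy : -1 ≤ y) (hy1 : y ≤ 1) (hc : 0 < c) :
    ‖w y‖ ≤ (c * (1 - y) + nn w' ^ 2 / c) / 2 := by
  have hI := intervalIntegral.integral_eq_sub_of_hasDerivAt (a := y) (b := 1)
    (fun y _ => hw y) (hw'.intervalIntegrable _ _)
  rw [h1, zero_sub] at hI
  have e1 : ‖w y‖ ≤ ∫ t in y..1, (c / 2 + ‖w' t‖ ^ 2 / c / 2) := by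
    rw [← norm_neg, ← hI]
    apply intervalIntegral.norm_integral_le_of_norm_le hy1
    · refine Filter.Eventually.of_forall (fun t _ => ?_)
      have : ‖w' t‖ ^ 2 / c * c = ‖w' t‖ ^ 2 := by field_simp
      have h2 : 0 ≤ ‖w' t‖ ^ 2 / c := by positivity
      have h3 : ‖w' t‖ * c ≤ (c / 2 + ‖w' t‖ ^ 2 / c / 2) * c := by
        nlinarith [sq_nonneg (‖w' t‖ - c)]
      exact le_of_mul_le_mul_right h3 hc
    · exact (by fun_prop : Continuous _).intervalIntegrable _ _
  rw [intervalIntegral.integral_add (by simp)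
    ((by fun_prop : Continuous _).intervalIntegrable _ _)] at e1
  simp only [intervalIntegral.integral_const, intervalIntegral.integral_div, smul_eq_mul] at e1
  have e2 : ∫ t in y..1, ‖w' t‖ ^ 2 ≤ nn w' ^ 2 := by
    rw [nn_sq]
    apply intervalIntegral.integral_mono_interval hy hy1 le_rfl
    · exact Filter.Eventually.of_forall (fun t => by positivity)
    · exact (by fun_prop : Continuous _).intervalIntegrable _ _
  have e3 : (∫ t in y..1, ‖w' t‖ ^ 2) / c ≤ nn w' ^ 2 / c := by gcongr
  linarith

lemma w_bound2 (w w' : ℝ → ℂ) (hw : ∀ y, HasDerivAt w (w' y) y) (hw' : Continuous w')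
    (h1 : w 1 = 0) (y q : ℝ) (hy : -1 ≤ y) (hy1 : y ≤ 1) (hq : 0 < q) :
    ‖w y‖ ≤ q * nn w' * Real.exp ((1 - y) / (2 * q ^ 2)) := by
  have hE := Real.add_one_le_exp ((1 - y) / (2 * q ^ 2))
  rcases (nn_nonneg w').eq_or_lt with h | h
  · rw [← h]
    simp only [mul_zero, zero_mul]
    apply le_of_forall_pos_le_add
    intro c hc
    have := w_bound w w' hw hw' h1 y c hy hy1 hc
    rw [← h] at this
    simp at this
    nlinarith
  · have := w_bound w w' hw hw' h1 y (nn w' / q) hy hy1 (by positivity)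
    have e : (nn w' / q * (1 - y) + nn w' ^ 2 / (nn w' / q)) / 2
        = q * nn w' * ((1 - y) / (2 * q ^ 2) + 1 / 2) := by field_simp
    rw [e] at this
    refine this.trans (mul_le_mul_of_nonneg_left (by linarith) (by positivity))

lemma layer_bound (w w' : ℝ → ℂ) (hw : ∀ y, HasDerivAt w (w' y) y) (hw' : Continuous w')
    (h1 : w 1 = 0) (q : ℝ) (hq : 0 < q) (φ : ℝ → ℝ)
    (hb : ∀ y, -1 ≤ y → y ≤ 1 → |φ y| ≤ 1) :
    ‖∫ y in (-1:ℝ)..1, ((φ y * Real.exp (-((1 / q ^ 2) * (1 - y))) : ℝ) : ℂ) * w y‖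
      ≤ 2 * q ^ 3 * nn w' := by
  have h2 : ‖∫ y in (-1:ℝ)..1, ((φ y * Real.exp (-((1 / q ^ 2) * (1 - y))) : ℝ) : ℂ) * w y‖
      ≤ ∫ y in (-1:ℝ)..1, q * nn w' * Real.exp (-((1 / (2 * q ^ 2)) * (1 - y))) := by
    apply intervalIntegral.norm_integral_le_of_norm_le (by norm_num)
    · refine Filter.Eventually.of_forall (fun y hy => ?_)
      have b := w_bound2 w w' hw hw' h1 y q hy.1.le hy.2 hq
      rw [norm_mul, Complex.norm_real, Real.norm_eq_abs, abs_mul, abs_of_pos (Real.exp_pos _)]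
      calc _ ≤ (1 * Real.exp (-((1 / q ^ 2) * (1 - y)))) *
            (q * nn w' * Real.exp ((1 - y) / (2 * q ^ 2))) :=
            mul_le_mul (mul_le_mul_of_nonneg_right (hb y hy.1.le hy.2) (Real.exp_pos _).le) b
              (norm_nonneg _) (by positivity)
        _ = q * nn w' * (Real.exp (-((1 / q ^ 2) * (1 - y))) * Real.exp ((1 - y) / (2 * q ^ 2))) := by
            ring
        _ = _ := by
            rw [← Real.exp_add]; congr 2; field_simp; ring
    · exact (by fun_prop : Continuous _).intervalIntegrable _ _
  rw [intervalIntegral.integral_const_mul] at h2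
  have h3 := int_exp (1 / (2 * q ^ 2)) (by positivity)
  refine h2.trans ((mul_le_mul_of_nonneg_left h3 (mul_nonneg hq.le (nn_nonneg _))).trans ?_)
  apply le_of_eq; field_simp

/-- Abstract main estimate with a test function `G` solving `((y - λ) - iδ) G = Φ`. -/
lemma main_test (k ε lam δ : ℝ) (w w' : ℝ → ℂ) (M : ℝ) (hδ : 0 < δ) (hk : 1 ≤ |k|)
    (hkδ : |k| * δ ≤ 1) (hε : 0 < ε) (hε2 : ε ≤ 1/416) (hM : 0 ≤ M)
    (hw : ∀ y, HasDerivAt w (w' y) y) (hw' : Continuous w') (h0 : w (-1) = 0) (h1 : w 1 = 0)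
    (hW : Weak (|k| * δ ^ 3) k (ε * (|k| * δ)) lam w w' M)
    (G G' Φ : ℝ → ℂ) (hG : ∀ y, HasDerivAt G (G' y) y) (hG' : Continuous G')
    (g0 : G (-1) = 0) (g1 : G 1 = 0) (hΦc : Continuous Φ)
    (hΦ : ∀ y : ℝ, (((y - lam : ℝ) : ℂ) - Complex.I * (δ : ℂ)) * G y = Φ y) :
    |k| * ‖∫ y in (-1:ℝ)..1, Φ y * w y‖ ≤ M * (16 * nn G' + 319 * (nn G / δ)) := by
  obtain ⟨ha, hb⟩ := resolvent_bd k ε lam δ w w' M hδ hk hkδ hε hε2 hM hw hw' h0 h1 hW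
  have hwc : Continuous w := continuous_iff_continuousAt.2 fun y => (hw y).continuousAt
  have hGc : Continuous G := continuous_iff_continuousAt.2 fun y => (hG y).continuousAt
  have hK : 0 < |k| := by linarith
  have hδ1 : δ ≤ 1 := by nlinarith
  have h := hW G G' hG hG' g0 g1
  set ν := |k| * δ ^ 3 with hν
  have hνp : 0 < ν := by positivity
  set c : ℝ := ν * k ^ 2 - ε * (|k| * δ) with hc
  have e2 : ∫ y in (-1:ℝ)..1, ((c : ℂ)
          + Complex.I * ((k * (y - lam) : ℝ) : ℂ)) * (w y * G y)
      = ((c - k * δ : ℝ) : ℂ) * (∫ y in (-1:ℝ)..1, w y * G y)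
        + Complex.I * (k : ℂ) * ∫ y in (-1:ℝ)..1, Φ y * w y := by
    rw [← intervalIntegral.integral_const_mul, ← intervalIntegral.integral_const_mul,
      ← intervalIntegral.integral_add]
    · congr 1; ext y
      rw [← hΦ y]
      push_cast
      linear_combination ((k:ℂ) * δ * w y * G y) * Complex.I_sq
    · exact (by fun_prop : Continuous _).intervalIntegrable _ _
    · exact (by fun_prop : Continuous _).intervalIntegrable _ _
  rw [e2] at h
  have c1 : ‖∫ y in (-1:ℝ)..1, w' y * G' y‖ ≤ 1 * (nn w' * nn G') :=
    cs_norm _ _ _ hw' hG' 1 zero_le_one (fun y => by simp)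
  have c2 : ‖∫ y in (-1:ℝ)..1, w y * G y‖ ≤ 1 * (nn w * nn G) :=
    cs_norm _ _ _ hwc hGc 1 zero_le_one (fun y => by simp)
  set T := ∫ y in (-1:ℝ)..1, Φ y * w y
  set X := ∫ y in (-1:ℝ)..1, w' y * G' y
  set Y := ∫ y in (-1:ℝ)..1, w y * G y
  have hcb : |c - k * δ| ≤ 3 * (|k| * δ) := by
    have p1 : 0 ≤ ν * k ^ 2 := by positivity
    have p2 : ν * k ^ 2 ≤ |k| * δ := by
      have : ν * k ^ 2 = (|k| * δ) * (|k| * δ) ^ 2 := by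
        rw [hν, ← sq_abs k]; ring
      rw [this]
      have q : (|k| * δ) ^ 2 ≤ 1 := pow_le_one₀ (by positivity) hkδ
      nlinarith [mul_pos hK hδ]
    have p3 : 0 ≤ ε * (|k| * δ) := by positivity
    have p4 : ε * (|k| * δ) ≤ |k| * δ := by nlinarith [mul_pos hK hδ]
    have p5 : |k * δ| = |k| * δ := by rw [abs_mul, abs_of_pos hδ]
    have p6 := abs_le.1 p5.le
    rw [abs_le, hc]
    constructor <;> linarith [p6.1, p6.2]
  have eT : |k| * ‖T‖ = ‖((ν:ℂ) * X + (((c - k * δ : ℝ) : ℂ) * Y + Complex.I * (k : ℂ) * T))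
      - (ν:ℂ) * X - ((c - k * δ : ℝ) : ℂ) * Y‖ := by
    have : ((ν:ℂ) * X + (((c - k * δ : ℝ) : ℂ) * Y + Complex.I * (k : ℂ) * T))
      - (ν:ℂ) * X - ((c - k * δ : ℝ) : ℂ) * Y = Complex.I * (k : ℂ) * T := by ring
    rw [this]; simp
  rw [eT]
  refine (norm_sub_le _ _).trans ?_
  refine (add_le_add_left (norm_sub_le _ _) _).trans ?_
  have t1 : ‖(ν:ℂ) * X‖ ≤ 15 * M * nn G' := by
    rw [norm_mul, Complex.norm_real, Real.norm_eq_abs, abs_of_pos hνp]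
    have : ν * nn w' ≤ 15 * M := by
      have := mul_le_mul_of_nonneg_left ha hνp.le
      have q : ν * (15 * (M / ν)) = 15 * M := by field_simp
      linarith
    calc ν * ‖X‖ ≤ ν * (1 * (nn w' * nn G')) := mul_le_mul_of_nonneg_left c1 hνp.le
      _ = (ν * nn w') * nn G' := by ring
      _ ≤ _ := mul_le_mul_of_nonneg_right this (nn_nonneg _)
  have t2 : ‖((c - k * δ : ℝ) : ℂ) * Y‖ ≤ 318 * M * (nn G / δ) := by
    rw [norm_mul, Complex.norm_real, Real.norm_eq_abs]
    have hn := nn_nonneg G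
    have hn2 := nn_nonneg w
    calc |c - k * δ| * ‖Y‖ ≤ (3 * (|k| * δ)) * (1 * (nn w * nn G)) :=
          mul_le_mul hcb c2 (norm_nonneg _) (by positivity)
      _ = 3 * ν * (nn w / δ) * (nn G / δ) := by rw [hν]; field_simp
      _ ≤ 3 * ν * (106 * (M / ν)) * (nn G / δ) := by gcongr
      _ = _ := by field_simp; ring
  have hn := nn_nonneg G
  have t3 : nn G ≤ nn G / δ := by
    rw [le_div_iff₀ hδ]; nlinarith
  have t4 : M * (nn G + nn G') ≤ M * (nn G / δ + nn G') := by gcongr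
  linarith

lemma sq3 (a b c : ℝ) : (a + b + c) ^ 2 ≤ 3 * (a ^ 2 + b ^ 2 + c ^ 2) := by
  nlinarith [sq_nonneg (a - b), sq_nonneg (b - c), sq_nonneg (a - c)]

lemma abs_aux (p q h h' : ℝ) (hp : 0 ≤ p) (hq : 0 ≤ q) (h0 : 0 ≤ h) (h1 : h ≤ 1) (h2 : 0 ≤ h') :
    |p * (1 - h) + q * (-h')| ≤ p + q * h' := by
  rw [abs_le]
  have a1 := mul_nonneg hp h0
  have a2 := mul_nonneg hq h2
  have a3 := mul_nonneg hp (sub_nonneg.2 h1)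
  constructor <;> nlinarith

set_option maxHeartbeats 2000000 in
lemma core (k ε lam s β a : ℝ) (w w' : ℝ → ℂ) (M : ℝ) (hs : 0 < s) (hβ : 1 ≤ β) (hk : 1 ≤ |k|)
    (hkδ : |k| * s ^ 2 ≤ 1) (hε : 0 < ε) (hε2 : ε ≤ 1/416) (hM : 0 ≤ M)
    (hw : ∀ y, HasDerivAt w (w' y) y) (hw' : Continuous w') (h0 : w (-1) = 0) (h1 : w 1 = 0)
    (hW : Weak (|k| * (s ^ 2) ^ 3) k (ε * (|k| * s ^ 2)) lam w w' M)
    (hD : s ^ 2 * β ^ 4 = s ^ 2 + |1 - lam|) (ha : 0 ≤ a) (haβ : a ≤ β ^ 3)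
    (haA : a ≤ 1 + |k| * |1 - lam|) :
    a * ‖∫ y in (-1:ℝ)..1,
      ((Real.sinh (|k| * (y + 1)) / Real.sinh (2 * |k|) : ℝ) : ℂ) * w y‖
      ≤ 3000 * (M / (|k| * s ^ 3)) := by
  have hK : 0 < |k| := by linarith
  have hβ0 : 0 < β := by linarith
  obtain ⟨hr, -⟩ := resolvent_bd k ε lam (s ^ 2) w w' M (by positivity) hk hkδ hε hε2 hM hw hw'
    h0 h1 hW
  have hwc : Continuous w := continuous_iff_continuousAt.2 fun y => (hw y).continuousAt
  set K := |k| with hKdef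
  set q : ℝ := s / β with hq
  have hq0 : 0 < q := by positivity
  set φ : ℝ → ℝ := fun y => Real.sinh (K * (y + 1)) / Real.sinh (2 * K) with hφ
  set φ' : ℝ → ℝ := fun y => K * Real.cosh (K * (y + 1)) / Real.sinh (2 * K) with hφ'
  set η : ℝ → ℝ := fun y => Real.exp (-((1 / q ^ 2) * (1 - y))) with hη
  set η' : ℝ → ℝ := fun y => (1 / q ^ 2) * Real.exp (-((1 / q ^ 2) * (1 - y))) with hη'
  have cφ : Continuous φ := by rw [hφ]; fun_prop
  have cφ' : Continuous φ' := by rw [hφ']; fun_prop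
  have cη : Continuous η := by rw [hη]; fun_prop
  have cη' : Continuous η' := by rw [hη']; fun_prop
  have dφ : ∀ y, HasDerivAt φ (φ' y) y := by
    intro y
    have a1 : HasDerivAt (fun y : ℝ => K * (y + 1)) K y :=
      (((hasDerivAt_id y).add_const 1).const_mul K).congr_deriv (by simp)
    exact (a1.sinh.div_const _).congr_deriv (by simp only [hφ']; ring)
  have dη : ∀ y, HasDerivAt η (η' y) y := by
    intro y
    have a1 : HasDerivAt (fun y : ℝ => -((1 / q ^ 2) * (1 - y))) (1 / q ^ 2) y :=
      (((hasDerivAt_id y).const_sub 1).const_mul (1 / q ^ 2)).fun_neg.congr_deriv (by simp)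
    exact a1.exp.congr_deriv (by simp only [hη']; ring)
  set δ := s ^ 2 with hδdef
  have hδ : 0 < δ := by positivity
  have hRpos : ∀ y : ℝ, 0 < δ ^ 2 + (y - lam) ^ 2 := fun y => by positivity
  have hz : ∀ y : ℝ, ((y - lam : ℝ) : ℂ) - Complex.I * (δ : ℂ) ≠ 0 := by
    intro y hy
    have := congrArg Complex.im hy
    simp at this
    exact hδ.ne' this
  set Q : ℝ → ℂ := fun y => (((y - lam : ℝ) : ℂ) - Complex.I * (δ : ℂ))⁻¹ with hQ
  have cQ : Continuous Q := by
    rw [hQ]; exact Continuous.inv₀ (by fun_prop) hz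
  have dQ : ∀ y, HasDerivAt Q (-(Q y) ^ 2) y := by
    intro y
    have a1 : HasDerivAt (fun y : ℝ => ((y - lam : ℝ) : ℂ) - Complex.I * (δ : ℂ)) 1 y := by
      have := (((hasDerivAt_id y).sub_const lam).ofReal_comp).sub_const (Complex.I * (δ : ℂ))
      simpa using this
    refine (a1.inv (hz y)).congr_deriv ?_
    simp only [hQ]
    rw [inv_pow, div_eq_mul_inv]; ring
  have nQ : ∀ y, ‖Q y‖ ^ 2 = 1 / (δ ^ 2 + (y - lam) ^ 2) := by
    intro y
    simp only [hQ]
    rw [norm_inv, inv_pow, ← Complex.normSq_eq_norm_sq, Complex.normSq_apply, one_div]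
    congr 1
    simp
    ring
  set G : ℝ → ℂ := fun y => ((φ y * (1 - η y) : ℝ) : ℂ) * Q y with hG
  set G' : ℝ → ℂ := fun y => ((φ' y * (1 - η y) + φ y * (- η' y) : ℝ) : ℂ) * Q y
    + ((φ y * (1 - η y) : ℝ) : ℂ) * (-(Q y) ^ 2) with hG'
  have cG : Continuous G := by rw [hG]; fun_prop
  have cG' : Continuous G' := by rw [hG']; fun_prop
  have dG : ∀ y, HasDerivAt G (G' y) y := by
    intro y
    exact (((dφ y).mul ((dη y).const_sub 1)).ofReal_comp).mul (dQ y)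
  have g0 : G (-1) = 0 := by simp [hG, hφ]
  have g1 : G 1 = 0 := by simp [hG, hη]
  have mt := main_test k ε lam δ w w' M hδ hk hkδ hε hε2 hM hw hw' h0 h1 hW G G'
    (fun y => ((φ y * (1 - η y) : ℝ) : ℂ)) dG cG' g0 g1 (by fun_prop) (by
      intro y
      simp only [hG, hQ]
      have := hz y
      field_simp)
  -- bounds on the test function
  set P : ℝ → ℝ := fun y => 1 / (δ ^ 2 + (y - lam) ^ 2) + K ^ 2 * Real.exp (-(K * (1 - y))) with hP
  have cP1 : Continuous fun y : ℝ => 1 / (δ ^ 2 + (y - lam) ^ 2) :=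
    Continuous.div (by fun_prop) (by fun_prop) (fun y => (hRpos y).ne')
  have cP : Continuous P := by rw [hP]; exact cP1.add (by fun_prop)
  have hKδ : K ≤ 1 / δ := by rw [le_div_iff₀ hδ]; exact hkδ
  have hPint : ∫ y in (-1:ℝ)..1, P y ≤ 5 / δ := by
    simp only [hP]
    rw [intervalIntegral.integral_add (cP1.intervalIntegrable _ _)
      ((by fun_prop : Continuous _).intervalIntegrable _ _), intervalIntegral.integral_const_mul]
    have i1 := int_cauchy lam δ hδ
    have i2 := mul_le_mul_of_nonneg_left (int_exp K hK) (sq_nonneg K)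
    have : K ^ 2 * (1 / K) = K := by field_simp
    have h5 : 5 / δ = 4 / δ + 1 / δ := by ring
    linarith
  have η01 : ∀ y, y ≤ 1 → 0 ≤ η y ∧ η y ≤ 1 := by
    intro y hy
    refine ⟨(Real.exp_pos _).le, ?_⟩
    simp only [hη]
    rw [Real.exp_le_one_iff]
    have : 0 ≤ 1 / q ^ 2 * (1 - y) := mul_nonneg (by positivity) (by linarith)
    linarith
  have b1 : ∀ y, -1 ≤ y → y ≤ 1 → a ^ 2 * (φ y ^ 2 * ‖Q y‖ ^ 2) ≤ 8 * P y := by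
    intro y hy hy1
    obtain ⟨p1, p2, -, -⟩ := phi_le K y hk hy hy1
    rw [nQ]
    exact pt_main K δ (y - lam) (1 - y) (φ y) a hK hδ (by linarith) p1 p2 ha
      (by rw [show 1 - y + (y - lam) = 1 - lam by ring]; exact haA)
  have b2 : ∀ y, -1 ≤ y → y ≤ 1 → a ^ 2 * (φ' y ^ 2 * ‖Q y‖ ^ 2) ≤ 128 / δ ^ 2 * P y := by
    intro y hy hy1
    obtain ⟨-, -, p1, p2⟩ := phi_le K y hk hy hy1
    rw [nQ]
    have := pt_main K δ (y - lam) (1 - y) (φ' y / (4 * K)) a hK hδ (by linarith)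
      (div_nonneg p1 (by positivity))
      (by rw [div_le_iff₀ (by positivity)]; linarith) ha
      (by rw [show 1 - y + (y - lam) = 1 - lam by ring]; exact haA)
    have hP0 : 0 ≤ P y := by simp only [hP]; have := hRpos y; positivity
    have hK2 : K ^ 2 ≤ 1 / δ ^ 2 := by
      have := pow_le_pow_left₀ hK.le hKδ 2
      rwa [div_pow, one_pow] at this
    calc a ^ 2 * (φ' y ^ 2 * (1 / (δ ^ 2 + (y - lam) ^ 2)))
        = 16 * K ^ 2 * (a ^ 2 * ((φ' y / (4 * K)) ^ 2 * (1 / (δ ^ 2 + (y - lam) ^ 2)))) := by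
          field_simp; ring
      _ ≤ 16 * K ^ 2 * (8 * P y) := mul_le_mul_of_nonneg_left this (by positivity)
      _ = 128 * P y * K ^ 2 := by ring
      _ ≤ 128 * P y * (1 / δ ^ 2) := mul_le_mul_of_nonneg_left hK2 (by positivity)
      _ = _ := by ring
  have b3 : ∀ y, -1 ≤ y → y ≤ 1 → a ^ 2 * (φ y ^ 2 * ‖Q y‖ ^ 4) ≤ 8 / δ ^ 2 * P y := by
    intro y hy hy1
    have hP0 : 0 ≤ P y := by simp only [hP]; have := hRpos y; positivity
    have hQ2 : ‖Q y‖ ^ 2 ≤ 1 / δ ^ 2 := by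
      rw [nQ]
      apply one_div_le_one_div_of_le (by positivity)
      nlinarith [sq_nonneg (y - lam)]
    calc a ^ 2 * (φ y ^ 2 * ‖Q y‖ ^ 4) = (a ^ 2 * (φ y ^ 2 * ‖Q y‖ ^ 2)) * ‖Q y‖ ^ 2 := by ring
      _ ≤ 8 * P y * (1 / δ ^ 2) := mul_le_mul (b1 y hy hy1) hQ2 (by positivity) (by positivity)
      _ = _ := by ring
  have b4 : ∀ y, -1 ≤ y → y ≤ 1 → a ^ 2 * (φ y ^ 2 * η' y ^ 2 * ‖Q y‖ ^ 2)
      ≤ 8 * β ^ 2 / δ ^ 4 * Real.exp (-((1 / q ^ 2) * (1 - y))) := by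
    intro y hy hy1
    obtain ⟨p1, p2, -, -⟩ := phi_le K y hk hy hy1
    have hφ1 : φ y ^ 2 ≤ 1 := by
      have : Real.exp (-(K * (1 - y))) ≤ 1 := by
        rw [Real.exp_le_one_iff]
        have : 0 ≤ K * (1 - y) := mul_nonneg hK.le (by linarith)
        linarith
      exact pow_le_one₀ p1 (p2.trans this)
    have hlδ : q ^ 2 ≤ δ := by
      rw [hq, div_pow, div_le_iff₀ (by positivity)]
      nlinarith [one_le_pow₀ hβ (n := 2)]
    have hl := pt_layer δ (q ^ 2) (y - lam) (1 - y) (δ * β ^ 4) hδ (by positivity) hlδ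
      (by linarith) (by positivity)
      (by rw [show 1 - y + (y - lam) = 1 - lam by ring]; exact hD.le)
    rw [nQ]
    have ha2 : a ^ 2 ≤ (β ^ 3) ^ 2 := pow_le_pow_left₀ ha haβ 2
    have hex : Real.exp (-((1 / q ^ 2) * (1 - y))) ^ 2 * Real.exp ((1 - y) / q ^ 2)
        = Real.exp (-((1 / q ^ 2) * (1 - y))) := by
      rw [← Real.exp_nat_mul, ← Real.exp_add]; congr 1; push_cast; ring
    have hRy := hRpos y
    calc a ^ 2 * (φ y ^ 2 * η' y ^ 2 * (1 / (δ ^ 2 + (y - lam) ^ 2)))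
        ≤ (β ^ 3) ^ 2 * (1 * η' y ^ 2 *
          (8 * Real.exp ((1 - y) / q ^ 2) / (δ * β ^ 4) ^ 2)) := by gcongr
      _ = (8 * (β ^ 3) ^ 2 * (1 / q ^ 2) ^ 2 / (δ * β ^ 4) ^ 2) *
          (Real.exp (-((1 / q ^ 2) * (1 - y))) ^ 2 * Real.exp ((1 - y) / q ^ 2)) := by
          simp only [hη']; ring
      _ = _ := by
          rw [hex, hq, hδdef]; congr 1; field_simp
  have nG : a ^ 2 * nn G ^ 2 ≤ 40 / δ := by
    rw [nn_sq, ← intervalIntegral.integral_const_mul]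
    have : ∫ y in (-1:ℝ)..1, a ^ 2 * ‖G y‖ ^ 2 ≤ ∫ y in (-1:ℝ)..1, 8 * P y := by
      apply intervalIntegral.integral_mono_on (by norm_num)
      · exact (by fun_prop : Continuous _).intervalIntegrable _ _
      · exact (by fun_prop : Continuous _).intervalIntegrable _ _
      · intro y hy
        refine le_trans ?_ (b1 y hy.1 hy.2)
        simp only [hG]
        rw [norm_mul, Complex.norm_real, Real.norm_eq_abs, mul_pow, sq_abs, mul_pow]
        have h01 := η01 y hy.2
        have : (1 - η y) ^ 2 ≤ 1 := pow_le_one₀ (by linarith [h01.2]) (by linarith [h01.1])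
        apply mul_le_mul_of_nonneg_left _ (sq_nonneg a)
        apply mul_le_mul_of_nonneg_right _ (sq_nonneg _)
        nlinarith [sq_nonneg (φ y)]
    rw [intervalIntegral.integral_const_mul (8:ℝ)] at this
    have h40 : 40 / δ = 8 * (5 / δ) := by ring
    linarith
  have nG' : a ^ 2 * nn G' ^ 2 ≤ 2064 / δ ^ 3 := by
    rw [nn_sq, ← intervalIntegral.integral_const_mul]
    have : ∫ y in (-1:ℝ)..1, a ^ 2 * ‖G' y‖ ^ 2 ≤ ∫ y in (-1:ℝ)..1,
        (408 / δ ^ 2 * P y + 24 * β ^ 2 / δ ^ 4 * Real.exp (-((1 / q ^ 2) * (1 - y)))) := by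
      apply intervalIntegral.integral_mono_on (by norm_num)
      · exact (by fun_prop : Continuous _).intervalIntegrable _ _
      · exact (by fun_prop : Continuous _).intervalIntegrable _ _
      · intro y hy
        have h01 := η01 y hy.2
        obtain ⟨p1, p2, p3, p4⟩ := phi_le K y hk hy.1 hy.2
        change 0 ≤ φ y at p1
        change 0 ≤ φ' y at p3
        have hη0 : 0 ≤ η' y := by simp only [hη']; positivity
        have hn : ‖G' y‖ ≤ φ' y * ‖Q y‖ + φ y * η' y * ‖Q y‖ + φ y * ‖Q y‖ ^ 2 := by
          simp only [hG']
          refine (norm_add_le _ _).trans ?_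
          rw [norm_mul, norm_mul, norm_neg, norm_pow, Complex.norm_real, Complex.norm_real,
            Real.norm_eq_abs, Real.norm_eq_abs, ← add_mul]
          apply add_le_add
          · apply mul_le_mul_of_nonneg_right _ (norm_nonneg _)
            exact abs_aux _ _ _ _ p3 p1 h01.1 h01.2 hη0
          · apply mul_le_mul_of_nonneg_right _ (by positivity)
            rw [abs_of_nonneg (mul_nonneg p1 (sub_nonneg.2 h01.2))]
            nlinarith [mul_nonneg p1 h01.1]
        have hn2 := (pow_le_pow_left₀ (norm_nonneg _) hn 2).trans (sq3 _ _ _)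
        have hn3 := mul_le_mul_of_nonneg_left hn2 (sq_nonneg a)
        have B1 := b2 y hy.1 hy.2
        have B2 := b3 y hy.1 hy.2
        have B3 := b4 y hy.1 hy.2
        have r1 : a ^ 2 * (3 * ((φ' y * ‖Q y‖) ^ 2 + (φ y * η' y * ‖Q y‖) ^ 2
            + (φ y * ‖Q y‖ ^ 2) ^ 2)) = 3 * (a ^ 2 * (φ' y ^ 2 * ‖Q y‖ ^ 2)
            + a ^ 2 * (φ y ^ 2 * ‖Q y‖ ^ 4) + a ^ 2 * (φ y ^ 2 * η' y ^ 2 * ‖Q y‖ ^ 2)) := by ring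
        rw [r1] at hn3
        have r2 : 408 / δ ^ 2 * P y + 24 * β ^ 2 / δ ^ 4 * Real.exp (-((1 / q ^ 2) * (1 - y)))
            = 3 * (128 / δ ^ 2 * P y + 8 / δ ^ 2 * P y
              + 8 * β ^ 2 / δ ^ 4 * Real.exp (-((1 / q ^ 2) * (1 - y)))) := by ring
        rw [r2]
        linarith
    rw [intervalIntegral.integral_add ((by fun_prop : Continuous _).intervalIntegrable _ _)
      ((by fun_prop : Continuous _).intervalIntegrable _ _), 
      intervalIntegral.integral_const_mul (408 / δ ^ 2),
      intervalIntegral.integral_const_mul (24 * β ^ 2 / δ ^ 4)] at this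
    have i1 := mul_le_mul_of_nonneg_left hPint (by positivity : 0 ≤ 408 / δ ^ 2)
    have i2 := mul_le_mul_of_nonneg_left (int_exp (1 / q ^ 2) (by positivity))
      (by positivity : 0 ≤ 24 * β ^ 2 / δ ^ 4)
    have r1 : 408 / δ ^ 2 * (5 / δ) = 2040 / δ ^ 3 := by field_simp; norm_num
    have r2 : 24 * β ^ 2 / δ ^ 4 * (1 / (1 / q ^ 2)) = 24 / δ ^ 3 := by
      rw [hq, hδdef]; field_simp
    have r3 : 2064 / δ ^ 3 = 2040 / δ ^ 3 + 24 / δ ^ 3 := by ring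
    linarith
  have mG : a * (nn G / δ) ≤ 7 / s ^ 3 := by
    apply le_of_sq_le_sq _ (by positivity)
    calc (a * (nn G / δ)) ^ 2 = a ^ 2 * nn G ^ 2 / δ ^ 2 := by ring
      _ ≤ (40 / δ) / δ ^ 2 := by gcongr
      _ = 40 / s ^ 6 := by rw [hδdef]; field_simp
      _ ≤ 49 / s ^ 6 := by gcongr; norm_num
      _ = _ := by field_simp; norm_num
  have mG' : a * nn G' ≤ 46 / s ^ 3 := by
    apply le_of_sq_le_sq _ (by positivity)
    calc (a * nn G') ^ 2 = a ^ 2 * nn G' ^ 2 := by ring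
      _ ≤ 2064 / δ ^ 3 := nG'
      _ = 2064 / s ^ 6 := by rw [hδdef]; ring
      _ ≤ 2116 / s ^ 6 := by gcongr; norm_num
      _ = _ := by field_simp; norm_num
  -- the layer
  have lb := layer_bound w w' hw hw' h1 q hq0 φ (by
    intro y hy hy1
    obtain ⟨p1, p2, -, -⟩ := phi_le K y hk hy hy1
    rw [abs_of_nonneg p1]
    refine p2.trans ?_
    rw [Real.exp_le_one_iff]
    have : 0 ≤ K * (1 - y) := mul_nonneg hK.le (by linarith)
    linarith)
  have split : ∫ y in (-1:ℝ)..1, ((φ y : ℝ) : ℂ) * w y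
      = (∫ y in (-1:ℝ)..1, ((φ y * (1 - η y) : ℝ) : ℂ) * w y)
        + ∫ y in (-1:ℝ)..1, ((φ y * Real.exp (-((1 / q ^ 2) * (1 - y))) : ℝ) : ℂ) * w y := by
    rw [← intervalIntegral.integral_add]
    · congr 1; ext y; simp only [hη]; push_cast; ring
    · exact (by fun_prop : Continuous _).intervalIntegrable _ _
    · exact (by fun_prop : Continuous _).intervalIntegrable _ _
  change a * ‖∫ y in (-1:ℝ)..1, ((φ y : ℝ) : ℂ) * w y‖ ≤ _
  rw [split]
  set T1 := ∫ y in (-1:ℝ)..1, ((φ y * (1 - η y) : ℝ) : ℂ) * w y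
  set T2 := ∫ y in (-1:ℝ)..1, ((φ y * Real.exp (-((1 / q ^ 2) * (1 - y))) : ℝ) : ℂ) * w y
  have f1 : a * ‖T1‖ ≤ 2969 * (M / (K * s ^ 3)) := by
    have m1 := mul_le_mul_of_nonneg_left mt ha
    have m2 : a * (M * (16 * nn G' + 319 * (nn G / δ)))
        ≤ M * (16 * (46 / s ^ 3) + 319 * (7 / s ^ 3)) := by
      calc _ = M * (16 * (a * nn G') + 319 * (a * (nn G / δ))) := by ring
        _ ≤ _ := by gcongr
    have m3 : M * (16 * (46 / s ^ 3) + 319 * (7 / s ^ 3)) = K * (2969 * (M / (K * s ^ 3))) := by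
      field_simp; norm_num
    have : K * (a * ‖T1‖) ≤ K * (2969 * (M / (K * s ^ 3))) := by linarith
    exact le_of_mul_le_mul_left this hK
  have f2 : a * ‖T2‖ ≤ 30 * (M / (K * s ^ 3)) := by
    have n0 := nn_nonneg w'
    calc a * ‖T2‖ ≤ β ^ 3 * (2 * q ^ 3 * (15 * (M / (K * δ ^ 3)))) := by
          apply mul_le_mul haβ _ (norm_nonneg _) (by positivity)
          exact lb.trans (by gcongr)
      _ = _ := by rw [hq, hδdef]; field_simp; ring
  have f3 := mul_le_mul_of_nonneg_left (norm_add_le T1 T2) ha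
  have f4 : 0 ≤ M / (K * s ^ 3) := by positivity
  linarith

lemma sinh_ratio_abs (k y : ℝ) :
    Real.sinh (k * (y + 1)) / Real.sinh (2 * k)
      = Real.sinh (|k| * (y + 1)) / Real.sinh (2 * |k|) := by
  rcases abs_cases k with ⟨h, -⟩ | ⟨h, -⟩
  · rw [h]
  · rw [h, neg_mul, Real.sinh_neg, mul_neg, Real.sinh_neg, neg_div_neg_eq]

lemma half (ν k ε lam : ℝ) (w w' : ℝ → ℂ) (M : ℝ) (hν : 0 < ν) (hk : 1 ≤ |k|)
    (hνk : ν * k ^ 2 ≤ 1) (hε : 0 < ε) (hε2 : ε ≤ 1/416) (hM : 0 ≤ M)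
    (hw : ∀ y, HasDerivAt w (w' y) y) (hw' : Continuous w') (h0 : w (-1) = 0) (h1 : w 1 = 0)
    (hW : Weak ν k (ε * ν ^ ((1:ℝ)/3) * |k| ^ ((2:ℝ)/3)) lam w w' M) :
    (1 + |k * (lam - 1)|) ^ ((3:ℝ)/4) * ‖∫ y in (-1:ℝ)..1,
      ((Real.sinh (k * (y + 1)) / Real.sinh (2 * k) : ℝ) : ℂ) * w y‖
      ≤ 3000 * ν ^ (-(1:ℝ)/2) * |k| ^ (-(1:ℝ)/2) * M := by
  have hK : 0 < |k| := by linarith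
  set s : ℝ := (ν / |k|) ^ ((1:ℝ)/6) with hs
  have hs0 : 0 < s := by positivity
  have hs6 : s ^ 6 = ν / |k| := by
    rw [hs, ← Real.rpow_natCast, ← Real.rpow_mul (by positivity)]
    norm_num
  have hνs : |k| * (s ^ 2) ^ 3 = ν := by
    rw [← pow_mul, hs6]; field_simp
  have hks : |k| * s ^ 2 ≤ 1 := by
    have : (|k| * s ^ 2) ^ 3 ≤ 1 := by
      calc (|k| * s ^ 2) ^ 3 = (|k| * (s ^ 2) ^ 3) * |k| ^ 2 := by ring
        _ = ν * k ^ 2 := by rw [hνs, sq_abs]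
        _ ≤ 1 := hνk
    by_contra hcon
    push Not at hcon
    have := one_lt_pow₀ hcon (n := 3) (by norm_num)
    linarith
  have he : ε * ν ^ ((1:ℝ)/3) * |k| ^ ((2:ℝ)/3) = ε * (|k| * s ^ 2) := by
    rw [mul_assoc]
    congr 1
    have e1 : ν ^ ((1:ℝ)/3) = |k| ^ ((1:ℝ)/3) * s ^ 2 := by
      rw [← hνs, Real.mul_rpow hK.le (by positivity)]
      congr 1
      rw [← Real.rpow_natCast (s ^ 2) 3, ← Real.rpow_mul (by positivity)]
      norm_num
    have e2 : |k| ^ ((1:ℝ)/3) * |k| ^ ((2:ℝ)/3) = |k| := by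
      rw [← Real.rpow_add hK]; norm_num
    calc ν ^ ((1:ℝ)/3) * |k| ^ ((2:ℝ)/3)
        = (|k| ^ ((1:ℝ)/3) * |k| ^ ((2:ℝ)/3)) * s ^ 2 := by rw [e1]; ring
      _ = _ := by rw [e2]
  rw [he] at hW
  set B : ℝ := 1 + |1 - lam| / s ^ 2 with hB
  have hB1 : 1 ≤ B := by
    have : 0 ≤ |1 - lam| / s ^ 2 := by positivity
    linarith
  have hB0 : 0 < B := by linarith
  set β : ℝ := B ^ ((1:ℝ)/4) with hβ
  have hβ1 : 1 ≤ β := Real.one_le_rpow hB1 (by norm_num)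
  have hβ4 : β ^ 4 = B := by
    rw [hβ, ← Real.rpow_natCast, ← Real.rpow_mul hB0.le]; norm_num
  have hβ3 : β ^ 3 = B ^ ((3:ℝ)/4) := by
    rw [hβ, ← Real.rpow_natCast, ← Real.rpow_mul hB0.le]; norm_num
  have habs : |k * (lam - 1)| = |k| * |1 - lam| := by rw [abs_mul, abs_sub_comm]
  rw [habs]
  have hA1 : 1 ≤ 1 + |k| * |1 - lam| := by
    have : 0 ≤ |k| * |1 - lam| := by positivity
    linarith
  have hAB : 1 + |k| * |1 - lam| ≤ B := by
    rw [hB]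
    have : |k| * |1 - lam| ≤ |1 - lam| / s ^ 2 := by
      rw [le_div_iff₀ (by positivity)]
      nlinarith [abs_nonneg (1 - lam)]
    linarith
  have c := core k ε lam s β ((1 + |k| * |1 - lam|) ^ ((3:ℝ)/4)) w w' M hs0 hβ1 hk hks hε hε2 hM
    hw hw' h0 h1 (by rw [hνs]; exact hW) (by rw [hβ4, hB]; field_simp) (by positivity)
    (by rw [hβ3]; exact Real.rpow_le_rpow (by linarith) hAB (by norm_num))
    (by
      calc (1 + |k| * |1 - lam|) ^ ((3:ℝ)/4) ≤ (1 + |k| * |1 - lam|) ^ (1:ℝ) :=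
            Real.rpow_le_rpow_of_exponent_le hA1 (by norm_num)
        _ = _ := Real.rpow_one _)
  have hfin : ν ^ (-(1:ℝ)/2) * |k| ^ (-(1:ℝ)/2) = 1 / (|k| * s ^ 3) := by
    rw [← Real.mul_rpow hν.le hK.le]
    have : ν * |k| = (|k| * s ^ 3) ^ 2 := by rw [← hνs]; ring
    rw [this, ← Real.rpow_natCast, ← Real.rpow_mul (by positivity)]
    norm_num
    rw [Real.rpow_neg_one, mul_inv]
    ring
  simp only [sinh_ratio_abs k]
  refine c.trans (le_of_eq ?_)
  rw [mul_assoc 3000, hfin]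
  ring

lemma nL2_eq (f : ℝ → ℂ) : nL2 f = nn f := by
  unfold nL2 nn
  rw [Real.sqrt_eq_rpow, intervalIntegral.integral_of_le (by norm_num),
    MeasureTheory.integral_Icc_eq_integral_Ioc]

lemma Icc_eq (f : ℝ → ℂ) : ∫ y in Set.Icc (-1:ℝ) 1, f y = ∫ y in (-1:ℝ)..1, f y := by
  rw [intervalIntegral.integral_of_le (by norm_num), MeasureTheory.integral_Icc_eq_integral_Ioc]

lemma weak_of_dominates (ν k e lam : ℝ) (w : ℝ → ℂ) (M : ℝ) (hw : ContDiff ℝ 2 w)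
    (hM : 0 ≤ M)
    (hd : Dominates (fun y : ℝ => -(ν : ℂ) * (deriv (deriv w) y - (k:ℂ)^2 * w y)
            + Complex.I * (k:ℂ) * ((y:ℂ) - (lam:ℂ)) * w y - (e : ℂ) * w y) M) :
    Weak ν k e lam w (deriv w) M := by
  intro g g' hg hg' g0 g1
  have hgc : Continuous g := continuous_iff_continuousAt.2 fun y => (hg y).continuousAt
  have dg : deriv g = g' := funext fun y => (hg y).deriv
  have hgC : ContDiff ℝ 1 g := by
    rw [contDiff_one_iff_deriv]
    exact ⟨fun y => (hg y).differentiableAt, by rw [dg]; exact hg'⟩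
  have hcd : ∀ y, HasDerivAt (fun y => (starRingEnd ℂ) (g y)) ((starRingEnd ℂ) (g' y)) y :=
    fun y => (hg y).star
  have dcg : deriv (fun y => (starRingEnd ℂ) (g y)) = fun y => (starRingEnd ℂ) (g' y) :=
    funext fun y => (hcd y).deriv
  have hw1 : ContDiff ℝ 1 (deriv w) := by
    have : ContDiff ℝ (1 + 1) w := by norm_num; exact hw
    exact (contDiff_succ_iff_deriv.1 this).2.2
  have hwc : Continuous w := hw.continuous
  have hw'c : Continuous (deriv w) := hw1.continuous
  have hw''c : Continuous (deriv (deriv w)) := (contDiff_one_iff_deriv.1 hw1).2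
  have dw' : ∀ y, HasDerivAt (deriv w) (deriv (deriv w) y) y := fun y =>
    ((contDiff_one_iff_deriv.1 hw1).1 y).hasDerivAt
  have h := hd (fun y => (starRingEnd ℂ) (g y)) (by
      rw [contDiff_one_iff_deriv]
      refine ⟨fun y => (hcd y).differentiableAt, ?_⟩
      rw [dcg]; fun_prop) (by simp [g0]) (by simp [g1])
  rw [dcg, nL2_eq, nL2_eq] at h
  have n1 : nn (fun y => (starRingEnd ℂ) (g y)) = nn g := by simp [nn]
  have n2 : nn (fun y => (starRingEnd ℂ) (g' y)) = nn g' := by simp [nn]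
  rw [n1, n2] at h
  unfold innI at h
  rw [Icc_eq] at h
  simp only [Complex.conj_conj] at h
  have ibp : ∫ y in (-1:ℝ)..1, deriv w y * g' y = - ∫ y in (-1:ℝ)..1, deriv (deriv w) y * g y := by
    rw [intervalIntegral.integral_mul_deriv_eq_deriv_mul (fun y _ => dw' y) (fun y _ => hg y)
      (hw''c.intervalIntegrable _ _) (hg'.intervalIntegrable _ _), g0, g1]
    simp
  have e1 : (ν:ℂ) * (∫ y in (-1:ℝ)..1, deriv w y * g' y)
      + ∫ y in (-1:ℝ)..1, (((ν * k ^ 2 - e : ℝ) : ℂ)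
          + Complex.I * ((k * (y - lam) : ℝ) : ℂ)) * (w y * g y)
      = ∫ y in (-1:ℝ)..1, (-(ν : ℂ) * (deriv (deriv w) y - (k:ℂ)^2 * w y)
            + Complex.I * (k:ℂ) * ((y:ℂ) - (lam:ℂ)) * w y - (e : ℂ) * w y) * g y := by
    rw [ibp, mul_neg, ← neg_mul, ← intervalIntegral.integral_const_mul,
      ← intervalIntegral.integral_add]
    · congr 1; ext y; push_cast; ring
    · exact (by fun_prop : Continuous _).intervalIntegrable _ _
    · exact (by fun_prop : Continuous _).intervalIntegrable _ _
  rw [e1]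
  refine h.trans (mul_le_mul_of_nonneg_left ?_ hM)
  rw [← Real.sqrt_eq_rpow]
  have p1 := nn_nonneg g
  have p2 := nn_nonneg g'
  rw [Real.sqrt_le_left (by positivity)]
  nlinarith [mul_nonneg p1 p2]

lemma int_neg (f : ℝ → ℂ) : ∫ y in (-1:ℝ)..1, f (-y) = ∫ y in (-1:ℝ)..1, f y := by
  rw [intervalIntegral.integral_comp_neg]; simp

lemma nn_neg (f : ℝ → ℂ) : nn (fun y => f (-y)) = nn f := by
  unfold nn
  rw [intervalIntegral.integral_comp_neg (fun y => ‖f y‖ ^ 2)]; simp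

lemma weak_reflect (ν k e lam : ℝ) (w w' : ℝ → ℂ) (M : ℝ) (hW : Weak ν k e lam w w' M) :
    Weak ν (-k) e (-lam) (fun y => w (-y)) (fun y => - w' (-y)) M := by
  intro g g' hg hg' g0 g1
  have hgd : ∀ y, HasDerivAt (fun y => g (-y)) (- g' (-y)) y := by
    intro y
    have := (hg (-y)).scomp y (hasDerivAt_neg y)
    exact this.congr_deriv (by simp)
  have h := hW (fun y => g (-y)) (fun y => - g' (-y)) hgd (by fun_prop) (by simpa using g1)
    (by simpa using g0)
  have n2 : nn (fun y => - g' (-y)) = nn g' := by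
    rw [← nn_neg g']; simp [nn]
  rw [nn_neg g, n2] at h
  refine le_trans (le_of_eq ?_) h
  congr 2
  · congr 1
    rw [← int_neg]
    congr 1; ext y; simp
  · rw [← int_neg]
    congr 1; ext y; simp only [neg_neg]; push_cast; ring

/-- `H^{-1}` bounds on the boundary-corrector coefficients `c₁, c₂`. -/
theorem statement6 :
    ∃ ε₀ C : ℝ, 0 < ε₀ ∧ ε₀ < 1 ∧ 0 < C ∧
      ∀ (ν : ℝ) (k : ℤ) (ε lam : ℝ) (wNa F : ℝ → ℂ) (c₁ c₂ : ℂ) (M : ℝ),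
        0 < ν → ν ≤ 1 → 1 ≤ |k| → ν * (k:ℝ)^2 ≤ 1 → 0 < ε → ε ≤ ε₀ →
        ContDiff ℝ 2 wNa → wNa (-1) = 0 → wNa 1 = 0 →
        (F = fun y : ℝ => -(ν : ℂ) * (deriv (deriv wNa) y - (k:ℂ)^2 * wNa y)
            + Complex.I * (k:ℂ) * ((y:ℂ) - (lam:ℂ)) * wNa y
            - ((ε * ν ^ ((1:ℝ)/3) * |(k:ℝ)| ^ ((2:ℝ)/3) : ℝ) : ℂ) * wNa y) →
        0 ≤ M → Dominates F M →
        c₁ = -∫ y in Set.Icc (-1:ℝ) 1,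
              ((Real.sinh ((k:ℝ) * (y + 1)) / Real.sinh (2 * (k:ℝ)) : ℝ) : ℂ) * wNa y →
        c₂ = ∫ y in Set.Icc (-1:ℝ) 1,
              ((Real.sinh ((k:ℝ) * (1 - y)) / Real.sinh (2 * (k:ℝ)) : ℝ) : ℂ) * wNa y →
        (1 + |(k:ℝ) * (lam - 1)|) ^ ((3:ℝ)/4) * ‖c₁‖
            + (1 + |(k:ℝ) * (lam + 1)|) ^ ((3:ℝ)/4) * ‖c₂‖
          ≤ C * ν ^ (-(1:ℝ)/2) * |(k:ℝ)| ^ (-(1:ℝ)/2) * M := by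
  
  refine ⟨1/416, 6000, by norm_num, by norm_num, by norm_num, ?_⟩
  intro ν k ε lam w F c₁ c₂ M hν _ hk hνk hε hε2 hw h0 h1 hF hM hd hc1 hc2
  have hk' : (1:ℝ) ≤ |(k:ℝ)| := by exact_mod_cast hk
  have hdw : ∀ y, HasDerivAt w (deriv w y) y := fun y =>
    ((hw.differentiable (by norm_num)) y).hasDerivAt
  have hw'c : Continuous (deriv w) := hw.continuous_deriv (by norm_num)
  have hW : Weak ν k (ε * ν ^ ((1:ℝ)/3) * |(k:ℝ)| ^ ((2:ℝ)/3)) lam w (deriv w) M := by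
    apply weak_of_dominates _ _ _ _ _ _ hw hM
    rw [hF] at hd
    simpa using hd
  have A := half ν k ε lam w (deriv w) M hν hk' hνk hε hε2 hM hdw hw'c h0 h1 hW
  have hW2 := weak_reflect _ _ _ _ _ _ _ hW
  have B := half ν (-k) ε (-lam) (fun y => w (-y)) (fun y => - deriv w (-y)) M hν
    (by rwa [abs_neg]) (by rwa [neg_sq]) hε hε2 hM
    (by
      intro y
      have := (hdw (-y)).scomp y (hasDerivAt_neg y)
      exact this.congr_deriv (by simp))
    (by fun_prop) (by simpa using h1) (by simpa using h0) (by rwa [abs_neg])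
  rw [abs_neg] at B
  have e1 : ‖c₁‖ = ‖∫ y in (-1:ℝ)..1,
      ((Real.sinh (k * (y + 1)) / Real.sinh (2 * k) : ℝ) : ℂ) * w y‖ := by
    rw [hc1, norm_neg, Icc_eq]
  have e2 : ‖c₂‖ = ‖∫ y in (-1:ℝ)..1,
      ((Real.sinh (-k * (y + 1)) / Real.sinh (2 * -k) : ℝ) : ℂ) * w (-y)‖ := by
    rw [hc2, Icc_eq, ← int_neg]
    congr 2; ext y
    rw [neg_mul, Real.sinh_neg, mul_neg, Real.sinh_neg, neg_div_neg_eq, sub_neg_eq_add, add_comm 1 y]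
  have e3 : |-(k:ℝ) * (-lam - 1)| = |(k:ℝ) * (lam + 1)| := by congr 1; ring
  rw [← e1] at A
  rw [← e2, e3] at B
  linarith
end
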